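/- There exists a constant C > 0 such that for every T with 0 ≤ T ≤ 1 and every Schwartz function φ₀ on ℝ², the free Zakharov–Kuznetsov evolution satisfies both (∫₀^T ‖U(t)φ₀‖_{L^∞(ℝ²)}^{9/4} dt)^{4/9} ≤ C ‖φ₀‖_{L²(ℝ²)} and (∫₀^T ‖U(t)φ₀‖_{L^∞(ℝ²)}^{9/4} dt)^{4/9} ≤ C ‖D_{x₁}^{-2/9} φ₀‖_{L²(ℝ²)}. -/

import Mathlib

/-!
The estimate is a Strichartz estimate, proved by the `TT*` method for a weight `|ξ₁|^{-s}` with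
`0 ≤ s < 1/4`; the two claims are the cases `s = 0` and `s = 2/9`.

* Dispersion (`dispersive`). The kernel `∫ |ξ₁|^{2s} e^{i(2π y·ξ + τ ξ₁|ξ|²)} dξ` is bounded by
  `C |τ|^{-(2+2s)/3}` uniformly in `y`. On the half plane `ξ₁ > 0`, the weight is truncated to a
  compact range of `ξ₁` and multiplied by `e^{-δ ξ₁ ξ₂²}`. The `ξ₂` integral is then a complex
  Gaussian, which contributes `|τ|^{-1/2}` and leaves an integral in `x = ξ₁` with amplitude
  `x^{2s-1/2} e^{-c/x}` and phase `τx³ + Ax - b/x`, where `b, c ≥ 0`. Since `b ≥ 0`, the third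
  derivative of the phase is at least `6τ`, and van der Corput's lemma (`vdc_three`) gives the
  remaining factor `τ^{-(1/2+2s)/3}` with constants independent of the regularisation
  (`osc_kernel`).
* Duality (`energy_full`, `young_time`, `dual_bound`). For a measurable curve `t ↦ X(t)`, the
  weighted `L²` norm of `ξ ↦ ∫₀¹ w(t) e^{i(2π X(t)·ξ + t ξ₁|ξ|²)} dt` squared is, by the dispersive
  estimate, at most a bilinear form in `|w|` with kernel `|t-t'|^{-(2+2s)/3}`. This kernel is in
  `L^{9/8}` of a bounded interval as `(2+2s)/3 · 9/8 < 1`, so Young's inequality bounds the form by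
  `‖w‖²_{L^{9/5}}`, and `9/5` is the exponent dual to `9/4`.
* Linearisation of the supremum (`strichartz_curve`, `strichartz_flow`). The estimate holds along
  every measurable curve with the same constant, hence for the supremum over a dense sequence, which
  is the limit of the maxima over finitely many points.
* Plancherel (`eLpNorm_FT_eq`, `wNorm_FT_eq_Dx1`). The weighted norm of the Fourier transform on the
  right-hand side is `‖φ‖_{L²}` for `s = 0` and `‖D_{x₁}^{-s} φ‖_{L²}` in general; the function
  `|ξ₁|^{-s} Fφ` is in `L¹ ∩ L²` because `s < 1/2`.
-/

open MeasureTheory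
open scoped ENNReal NNReal

noncomputable section

/-- Fourier transform on ℝ² (realized as ℝ × ℝ). -/
def FT (f : ℝ × ℝ → ℂ) : ℝ × ℝ → ℂ := fun ξ =>
  ∫ x : ℝ × ℝ,
    Complex.exp (((-(2 * Real.pi * (x.1 * ξ.1 + x.2 * ξ.2)) : ℝ) : ℂ) * Complex.I) * f x

/-- Inverse Fourier transform on ℝ². -/
def FTinv (f : ℝ × ℝ → ℂ) : ℝ × ℝ → ℂ := fun x =>
  ∫ ξ : ℝ × ℝ,
    Complex.exp ((((2 * Real.pi * (x.1 * ξ.1 + x.2 * ξ.2)) : ℝ) : ℂ) * Complex.I) * f ξ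

/-- The linear Zakharov–Kuznetsov group `U(t)φ = F⁻¹(e^{i t ξ₁(ξ₁²+ξ₂²)} Fφ)`. -/
def U (t : ℝ) (φ : ℝ × ℝ → ℂ) : ℝ × ℝ → ℂ :=
  FTinv (fun ξ => Complex.exp (Complex.I * ((t * ξ.1 * (ξ.1 ^ 2 + ξ.2 ^ 2) : ℝ) : ℂ)) * FT φ ξ)

/-- Fractional derivative in the first variable: `D^r_{x₁} f = F⁻¹(|ξ₁|^r F f)`. -/
def Dx1 (r : ℝ) (f : ℝ × ℝ → ℂ) : ℝ × ℝ → ℂ :=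
  FTinv (fun ξ => ((|ξ.1| ^ r : ℝ) : ℂ) * FT f ξ)

/-- Fractional derivative in the second variable: `D^r_{x₂} f = F⁻¹(|ξ₂|^r F f)`. -/
def Dx2 (r : ℝ) (f : ℝ × ℝ → ℂ) : ℝ × ℝ → ℂ :=
  FTinv (fun ξ => ((|ξ.2| ^ r : ℝ) : ℂ) * FT f ξ)

/-- Partial derivative ∂_{x₁}. -/
def pd1 (f : ℝ × ℝ → ℂ) : ℝ × ℝ → ℂ := fun x => fderiv ℝ f x (1, 0)

/-- Partial derivative ∂_{x₂}. -/
def pd2 (f : ℝ × ℝ → ℂ) : ℝ × ℝ → ℂ := fun x => fderiv ℝ f x (0, 1)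

/-- Duhamel integral `∫₀^t U(t-τ) g(τ) dτ`. -/
def Duh (g : ℝ → ℝ × ℝ → ℂ) (t : ℝ) : ℝ × ℝ → ℂ := fun x =>
  ∫ τ in (0:ℝ)..t, U (t - τ) (g τ) x

/-- Sobolev norm `‖f‖_{H^s(ℝ²)}`. -/
def HsNorm (s : ℝ) (f : ℝ × ℝ → ℂ) : ℝ≥0∞ :=
  (∫⁻ ξ : ℝ × ℝ,
      ENNReal.ofReal ((1 + ξ.1 ^ 2 + ξ.2 ^ 2) ^ s) * (‖FT f ξ‖₊ : ℝ≥0∞) ^ (2 : ℝ)) ^ ((1:ℝ)/2)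

/-- The mixed norm `‖f‖_{L^{9/4}_T L^∞_x}`. -/
def L94LinfNorm (T : ℝ) (f : ℝ → ℝ × ℝ → ℂ) : ℝ≥0∞ :=
  (∫⁻ t in Set.Icc (0:ℝ) T, (eLpNorm (f t) ⊤ volume) ^ ((9:ℝ)/4)) ^ ((4:ℝ)/9)

/-- The mixed norm `‖f‖_{L²_{x₁} L^∞_{x₂ T}}` (with genuine suprema). -/
def L2x1LinfNorm (T : ℝ) (f : ℝ → ℝ × ℝ → ℂ) : ℝ≥0∞ :=
  (∫⁻ x₁ : ℝ,
      (⨆ x₂ : ℝ, ⨆ t ∈ Set.Icc (0:ℝ) T, (‖f t (x₁, x₂)‖₊ : ℝ≥0∞)) ^ (2 : ℝ)) ^ ((1:ℝ)/2)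

/-- The mixed norm `‖f‖_{L^∞_{x₁} L²_{x₂ T}}`. -/
def LinfX1L2Norm (T : ℝ) (f : ℝ → ℝ × ℝ → ℂ) : ℝ≥0∞ :=
  ⨆ x₁ : ℝ,
    (∫⁻ x₂ : ℝ, ∫⁻ t in Set.Icc (0:ℝ) T, (‖f t (x₁, x₂)‖₊ : ℝ≥0∞) ^ (2 : ℝ)) ^ ((1:ℝ)/2)

/-- The mixed norm `‖g‖_{L¹_{x₁} L²_{x₂ T}}`. -/
def L1x1L2Norm (T : ℝ) (g : ℝ → ℝ × ℝ → ℂ) : ℝ≥0∞ :=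
  ∫⁻ x₁ : ℝ,
    (∫⁻ x₂ : ℝ, ∫⁻ τ in Set.Icc (0:ℝ) T, (‖g τ (x₁, x₂)‖₊ : ℝ≥0∞) ^ (2 : ℝ)) ^ ((1:ℝ)/2)

/-! ### Van der Corput estimates -/

/-- Reduction step of van der Corput's lemma. The function `f` grows at rate at least `ν`, so it is
larger than `νδ` in absolute value off an interval of length `2δ` around its sign change. That
interval is estimated trivially, and each of the two remaining pieces by the hypothesis `h`. -/
lemma split_at_zero {F : ℝ → ℂ} {f : ℝ → ℝ} {a b ν δ M : ℝ} (hab : a ≤ b)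
    (hF : ContinuousOn F (Set.Icc a b)) (hF1 : ∀ x ∈ Set.Icc a b, ‖F x‖ ≤ 1)
    (hf : ContinuousOn f (Set.Icc a b))
    (hν : 0 < ν) (hδ : 0 < δ) (hM : 0 ≤ M)
    (hmono : ∀ x ∈ Set.Icc a b, ∀ y ∈ Set.Icc a b, x ≤ y → ν * (y - x) ≤ f y - f x)
    (h : ∀ u v, a ≤ u → u ≤ v → v ≤ b →
      ((∀ x ∈ Set.Icc u v, ν * δ ≤ f x) ∨ (∀ x ∈ Set.Icc u v, f x ≤ -(ν * δ))) →
      ‖∫ x in u..v, F x‖ ≤ M) :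
    ‖∫ x in a..b, F x‖ ≤ 2 * M + 2 * δ := by
  -- `z` is a point where `f` changes sign
  obtain ⟨z, hz, hz1, hz2⟩ : ∃ z ∈ Set.Icc a b,
      (∀ x ∈ Set.Icc a b, x < z → f x ≤ -(ν * (z - x))) ∧
      (∀ x ∈ Set.Icc a b, z < x → ν * (x - z) ≤ f x) := by
    have ha : a ∈ Set.Icc a b := ⟨le_rfl, hab⟩
    have hb : b ∈ Set.Icc a b := ⟨hab, le_rfl⟩
    by_cases h0 : 0 ≤ f a
    · refine ⟨a, ha, fun x hx hxa => absurd hx.1 (not_le.2 hxa), fun x hx hax => ?_⟩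
      linarith [hmono a ha x hx hax.le]
    by_cases h1 : f b ≤ 0
    · refine ⟨b, hb, fun x hx hxb => ?_, fun x hx hxa => absurd hx.2 (not_le.2 hxa)⟩
      linarith [hmono x hx b hb hxb.le]
    push Not at h0 h1
    obtain ⟨z, hz, hfz⟩ := intermediate_value_Icc hab hf ⟨h0.le, h1.le⟩
    refine ⟨z, hz, fun x hx hxb => ?_, fun x hx hxa => ?_⟩
    · linarith [hmono x hx z hz hxb.le]
    · linarith [hmono z hz x hx hxa.le]
  have hInt : ∀ u v, a ≤ u → u ≤ v → v ≤ b → IntervalIntegrable F volume u v := by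
    intro u v h1 h2 h3
    exact (hF.mono (Set.Icc_subset_Icc h1 h3)).intervalIntegrable_of_Icc h2
  have hleft : ‖∫ x in a..(max a (z - δ)), F x‖ ≤ M := by
    rcases le_total a (z - δ) with hh | hh
    · rw [max_eq_right hh]
      refine h _ _ le_rfl hh (by linarith [hz.2]) (Or.inr fun x hx => ?_)
      refine (hz1 x ⟨hx.1, by linarith [hx.2, hz.2]⟩ (by linarith [hx.2])).trans (neg_le_neg ?_)
      exact mul_le_mul_of_nonneg_left (by linarith [hx.2]) hν.le
    · rw [max_eq_left hh]; simpa using hM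
  have hright : ‖∫ x in (min b (z + δ))..b, F x‖ ≤ M := by
    rcases le_total b (z + δ) with hh | hh
    · rw [min_eq_left hh]; simpa using hM
    · rw [min_eq_right hh]
      refine h _ _ (by linarith [hz.1]) hh le_rfl (Or.inl fun x hx => ?_)
      refine le_trans ?_ (hz2 x ⟨by linarith [hx.1, hz.1], hx.2⟩ (by linarith [hx.1]))
      exact mul_le_mul_of_nonneg_left (by linarith [hx.1]) hν.le
  set c := max a (z - δ) with hc
  set d := min b (z + δ) with hd
  have hac : a ≤ c := le_max_left _ _
  have hdb : d ≤ b := min_le_left _ _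
  have hcz : c ≤ z := max_le hz.1 (by linarith)
  have hzd : z ≤ d := le_min hz.2 (by linarith)
  have hcz' : z - δ ≤ c := le_max_right _ _
  have hzd' : d ≤ z + δ := min_le_right _ _
  have hmid : ‖∫ x in c..d, F x‖ ≤ 2 * δ := by
    have := intervalIntegral.norm_integral_le_of_norm_le_const (C := 1) (f := F) (a := c) (b := d)
      (fun x hx => by
        rw [Set.uIoc_of_le (hcz.trans hzd)] at hx
        exact hF1 x ⟨by linarith [hx.1], by linarith [hx.2]⟩)
    rw [abs_of_nonneg (by linarith)] at this
    linarith
  rw [← intervalIntegral.integral_add_adjacent_intervals (hInt a c le_rfl hac (by linarith))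
    (hInt c b hac (by linarith) le_rfl),
    ← intervalIntegral.integral_add_adjacent_intervals (hInt c d hac (by linarith) hdb)
    (hInt d b (by linarith) hdb le_rfl)]
  calc _ ≤ ‖∫ x in a..c, F x‖ + (‖∫ x in c..d, F x‖ + ‖∫ x in d..b, F x‖) :=
        (norm_add_le _ _).trans (by gcongr; exact norm_add_le _ _)
    _ ≤ _ := by linarith

/-- Van der Corput, first derivative. `σ = ±1` records the sign of `p''`. -/
lemma vdc_one {p p1 p2 : ℝ → ℝ} {a b l σ : ℝ} (hab : a ≤ b) (hl : 0 < l)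
    (hp : ∀ x ∈ Set.Icc a b, HasDerivAt p (p1 x) x)
    (hp1 : ∀ x ∈ Set.Icc a b, HasDerivAt p1 (p2 x) x)
    (hp2 : ContinuousOn p2 (Set.Icc a b)) (hσ : σ = 1 ∨ σ = -1)
    (hsgn : ∀ x ∈ Set.Icc a b, 0 ≤ σ * p2 x)
    (h : ∀ x ∈ Set.Icc a b, l ≤ p1 x) :
    ‖∫ x in a..b, Complex.exp ((p x : ℂ) * Complex.I)‖ ≤ 3 / l := by
  have hpos : ∀ x ∈ Set.Icc a b, 0 < p1 x := fun x hx => hl.trans_le (h x hx)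
  have cp : ContinuousOn p (Set.Icc a b) := fun x hx => (hp x hx).continuousAt.continuousWithinAt
  have cp1 : ContinuousOn p1 (Set.Icc a b) :=
    fun x hx => (hp1 x hx).continuousAt.continuousWithinAt
  have u : Set.uIcc a b = Set.Icc a b := Set.uIcc_of_le hab
  set E : ℝ → ℂ := fun x => Complex.exp ((p x : ℂ) * Complex.I) with hE
  have cE : ContinuousOn E (Set.Icc a b) := by fun_prop
  have nE : ∀ x, ‖E x‖ = 1 := fun x => Complex.norm_exp_ofReal_mul_I _
  have cq : ContinuousOn (fun x => p2 x / p1 x ^ 2) (Set.Icc a b) :=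
    hp2.div (cp1.pow 2) (fun x hx => (pow_pos (hpos x hx) 2).ne')
  have cR : ContinuousOn (fun x => -Complex.I * (((p2 x / p1 x ^ 2 : ℝ) : ℂ) * E x)) (Set.Icc a b) :=
    continuousOn_const.mul ((Complex.continuous_ofReal.comp_continuousOn cq).mul cE)
  have hH : ∀ x ∈ Set.Icc a b, HasDerivAt (fun x => -Complex.I * (E x * (((p1 x)⁻¹ : ℝ) : ℂ)))
      (E x - (-Complex.I * (((p2 x / p1 x ^ 2 : ℝ) : ℂ) * E x))) x := by
    intro x hx
    have h1 : HasDerivAt E (E x * ((p1 x : ℂ) * Complex.I)) x :=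
      ((hp x hx).ofReal_comp.mul_const Complex.I).cexp
    have h2 := ((hp1 x hx).inv (hpos x hx).ne').ofReal_comp
    have h3 := (h1.mul h2).const_mul (-Complex.I)
    refine h3.congr_deriv ?_
    have : (p1 x : ℂ) ≠ 0 := by exact_mod_cast (hpos x hx).ne'
    simp only [Pi.inv_apply]
    push_cast
    field_simp
    ring_nf
    simp only [Complex.I_sq]
    ring
  have hI := intervalIntegral.integral_eq_sub_of_hasDerivAt (a := a) (b := b)
    (fun x hx => hH x (u ▸ hx)) ((cE.sub cR).intervalIntegrable_of_Icc hab)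
  rw [intervalIntegral.integral_sub (cE.intervalIntegrable_of_Icc hab)
    (cR.intervalIntegrable_of_Icc hab), sub_eq_iff_eq_add] at hI
  have hbd : ∀ x ∈ Set.Icc a b, ‖-Complex.I * (E x * (((p1 x)⁻¹ : ℝ) : ℂ))‖ ≤ 1 / l := by
    intro x hx
    rw [norm_mul, norm_mul, nE, norm_neg, Complex.norm_I, Complex.norm_real, Real.norm_eq_abs,
      abs_of_pos (inv_pos.2 (hpos x hx)), one_mul, one_mul, one_div]
    exact inv_anti₀ hl (h x hx)
  have hR : ‖∫ x in a..b, -Complex.I * (((p2 x / p1 x ^ 2 : ℝ) : ℂ) * E x)‖ ≤ 1 / l := by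
    have hd : ∀ x ∈ Set.uIcc a b, HasDerivAt (fun x => -(σ * (p1 x)⁻¹)) (σ * (p2 x / p1 x ^ 2)) x := by
      intro x hx
      refine (((hp1 x (u ▸ hx)).inv (hpos x (u ▸ hx)).ne').const_mul σ).neg.congr_deriv ?_
      ring
    have hi := intervalIntegral.integral_eq_sub_of_hasDerivAt hd
      ((continuousOn_const.mul cq).intervalIntegrable_of_Icc hab)
    have : ‖∫ x in a..b, -Complex.I * (((p2 x / p1 x ^ 2 : ℝ) : ℂ) * E x)‖ ≤
        ∫ x in a..b, σ * (p2 x / p1 x ^ 2) := by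
      refine intervalIntegral.norm_integral_le_of_norm_le hab ?_
        ((continuousOn_const.mul cq).intervalIntegrable_of_Icc hab)
      refine Filter.Eventually.of_forall fun x hx => ?_
      have hx' : x ∈ Set.Icc a b := ⟨hx.1.le, hx.2⟩
      rw [norm_mul, norm_mul, nE, norm_neg, Complex.norm_I, Complex.norm_real, Real.norm_eq_abs,
        mul_one, one_mul]
      have := hsgn x hx'
      have h2 := pow_pos (hpos x hx') 2
      rw [abs_div, abs_of_pos h2, ← mul_div_assoc]
      gcongr
      rcases hσ with rfl | rfl
      · rw [abs_of_nonneg (by linarith)]; linarith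
      · rw [abs_of_nonpos (by linarith)]; linarith
    refine this.trans ?_
    rw [hi]
    have ha := hpos a ⟨le_rfl, hab⟩
    have hb := hpos b ⟨hab, le_rfl⟩
    have ha' : (p1 a)⁻¹ ≤ 1 / l := by
      rw [one_div]; exact inv_anti₀ hl (h a ⟨le_rfl, hab⟩)
    have hb' : (p1 b)⁻¹ ≤ 1 / l := by
      rw [one_div]; exact inv_anti₀ hl (h b ⟨hab, le_rfl⟩)
    have := inv_pos.2 ha
    have := inv_pos.2 hb
    rcases hσ with rfl | rfl <;> linarith
  rw [hI]
  calc _ ≤ (1 / l + 1 / l) + 1 / l := by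
        refine (norm_add_le _ _).trans (add_le_add ((norm_sub_le _ _).trans ?_) hR)
        exact add_le_add (hbd b ⟨hab, le_rfl⟩) (hbd a ⟨le_rfl, hab⟩)
    _ = _ := by ring

lemma norm_integral_exp_neg (p : ℝ → ℝ) (a b : ℝ) :
    ‖∫ x in a..b, Complex.exp (((-p x : ℝ) : ℂ) * Complex.I)‖ =
      ‖∫ x in a..b, Complex.exp ((p x : ℂ) * Complex.I)‖ := by
  rw [← Complex.norm_conj (∫ x in a..b, Complex.exp ((p x : ℂ) * Complex.I)),
    intervalIntegral, intervalIntegral, map_sub, ← integral_conj, ← integral_conj]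
  simp only [← Complex.exp_conj]
  simp

lemma growth_of_deriv {f f' : ℝ → ℝ} {a b ν : ℝ}
    (hf : ∀ x ∈ Set.Icc a b, HasDerivAt f (f' x) x) (h : ∀ x ∈ Set.Icc a b, ν ≤ f' x) :
    ∀ x ∈ Set.Icc a b, ∀ y ∈ Set.Icc a b, x ≤ y → ν * (y - x) ≤ f y - f x := by
  refine Convex.mul_sub_le_image_sub_of_le_deriv (convex_Icc a b)
    (fun x hx => (hf x hx).continuousAt.continuousWithinAt)
    (fun x hx => (hf x (interior_subset hx)).differentiableAt.differentiableWithinAt)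
    (fun x hx => ?_)
  rw [(hf x (interior_subset hx)).deriv]
  exact h x (interior_subset hx)

/-- Van der Corput, second derivative. -/
lemma vdc_two {p p1 p2 : ℝ → ℝ} {a b μ δ : ℝ} (hab : a ≤ b) (hμ : 0 < μ) (hδ : 0 < δ)
    (hp : ∀ x ∈ Set.Icc a b, HasDerivAt p (p1 x) x)
    (hp1 : ∀ x ∈ Set.Icc a b, HasDerivAt p1 (p2 x) x)
    (hp2 : ContinuousOn p2 (Set.Icc a b))
    (h : ∀ x ∈ Set.Icc a b, μ ≤ p2 x) :
    ‖∫ x in a..b, Complex.exp ((p x : ℂ) * Complex.I)‖ ≤ 2 * (3 / (μ * δ)) + 2 * δ := by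
  have cp : ContinuousOn p (Set.Icc a b) := fun x hx => (hp x hx).continuousAt.continuousWithinAt
  have cp1 : ContinuousOn p1 (Set.Icc a b) :=
    fun x hx => (hp1 x hx).continuousAt.continuousWithinAt
  refine split_at_zero (f := p1) (ν := μ) hab (by fun_prop)
    (fun x _ => (Complex.norm_exp_ofReal_mul_I _).le) cp1 hμ hδ (by positivity)
    (growth_of_deriv hp1 h) ?_
  intro u v hau huv hvb hcase
  have hs : Set.Icc u v ⊆ Set.Icc a b := Set.Icc_subset_Icc hau hvb
  rcases hcase with hc | hc
  · exact vdc_one (σ := 1) huv (by positivity) (fun x hx => hp x (hs hx))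
      (fun x hx => hp1 x (hs hx)) (hp2.mono hs) (Or.inl rfl)
      (fun x hx => by linarith [h x (hs hx)]) hc
  · rw [← norm_integral_exp_neg]
    exact vdc_one (p1 := fun x => - p1 x) (p2 := fun x => - p2 x) (σ := -1) huv (by positivity)
      (fun x hx => (hp x (hs hx)).neg)
      (fun x hx => (hp1 x (hs hx)).neg) (hp2.mono hs).neg (Or.inr rfl)
      (fun x hx => by linarith [h x (hs hx)]) (fun x hx => by linarith [hc x hx])

/-- Van der Corput, third derivative. -/
lemma vdc_three {p p1 p2 p3 : ℝ → ℝ} {a b ν δ : ℝ} (hab : a ≤ b) (hν : 0 < ν) (hδ : 0 < δ)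
    (hp : ∀ x ∈ Set.Icc a b, HasDerivAt p (p1 x) x)
    (hp1 : ∀ x ∈ Set.Icc a b, HasDerivAt p1 (p2 x) x)
    (hp2 : ∀ x ∈ Set.Icc a b, HasDerivAt p2 (p3 x) x)
    (h : ∀ x ∈ Set.Icc a b, ν ≤ p3 x) :
    ‖∫ x in a..b, Complex.exp ((p x : ℂ) * Complex.I)‖ ≤
      2 * (2 * (3 / (ν * δ * δ)) + 2 * δ) + 2 * δ := by
  have cp : ContinuousOn p (Set.Icc a b) := fun x hx => (hp x hx).continuousAt.continuousWithinAt
  have cp2 : ContinuousOn p2 (Set.Icc a b) :=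
    fun x hx => (hp2 x hx).continuousAt.continuousWithinAt
  refine split_at_zero (f := p2) (ν := ν) hab (by fun_prop)
    (fun x _ => (Complex.norm_exp_ofReal_mul_I _).le) cp2 hν hδ (by positivity)
    (growth_of_deriv hp2 h) ?_
  intro u v hau huv hvb hcase
  have hs : Set.Icc u v ⊆ Set.Icc a b := Set.Icc_subset_Icc hau hvb
  rcases hcase with hc | hc
  · exact vdc_two huv (by positivity) hδ (fun x hx => hp x (hs hx))
      (fun x hx => hp1 x (hs hx)) (cp2.mono hs) hc
  · rw [← norm_integral_exp_neg]
    exact vdc_two (p1 := fun x => - p1 x) (p2 := fun x => - p2 x) huv (by positivity) hδ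
      (fun x hx => (hp x (hs hx)).neg)
      (fun x hx => (hp1 x (hs hx)).neg) (cp2.mono hs).neg (fun x hx => by linarith [hc x hx])

/-- A monotone real amplitude costs at most its total variation plus its end value.
`σ = ±1` records the direction of monotonicity. -/
lemma norm_integral_amplitude_le {ψ ψ' : ℝ → ℝ} {f : ℝ → ℂ} {a b σ B : ℝ} (hab : a ≤ b)
    (hψ : ∀ x ∈ Set.Icc a b, HasDerivAt ψ (ψ' x) x) (hψ' : ContinuousOn ψ' (Set.Icc a b))
    (hf : ContinuousOn f (Set.Icc a b))
    (hσ : σ = 1 ∨ σ = -1) (hsgn : ∀ x ∈ Set.Icc a b, 0 ≤ σ * ψ' x)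
    (hB : ∀ c ∈ Set.Icc a b, ‖∫ x in a..c, f x‖ ≤ B) :
    ‖∫ x in a..b, (ψ x : ℂ) * f x‖ ≤ (|ψ b| + σ * (ψ b - ψ a)) * B := by
  have u : Set.uIcc a b = Set.Icc a b := Set.uIcc_of_le hab
  have hB0 : 0 ≤ B := by simpa using hB a ⟨le_rfl, hab⟩
  have cG : ContinuousOn (fun c => ∫ x in a..c, f x) (Set.Icc a b) := by
    have := intervalIntegral.continuousOn_primitive_interval' (μ := volume)
      (hf.intervalIntegrable_of_Icc hab) (u ▸ ⟨le_rfl, hab⟩ : a ∈ Set.uIcc a b)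
    rwa [u] at this
  have hd : ∀ x ∈ Set.Ioo (min a b) (max a b), HasDerivAt (fun c => ∫ x in a..c, f x) (f x) x := by
    intro x hx
    rw [min_eq_left hab, max_eq_right hab] at hx
    refine intervalIntegral.integral_hasDerivAt_right
      ((hf.mono (Set.Icc_subset_Icc le_rfl hx.2.le)).intervalIntegrable_of_Icc hx.1.le) ?_
      (hf.continuousAt (Icc_mem_nhds hx.1 hx.2))
    exact (hf.mono Set.Ioo_subset_Icc_self).stronglyMeasurableAtFilter isOpen_Ioo x hx
  have cψ : ContinuousOn ψ (Set.Icc a b) := fun x hx => (hψ x hx).continuousAt.continuousWithinAt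
  have key := intervalIntegral.integral_mul_deriv_eq_deriv_mul_of_hasDerivAt (a := a) (b := b)
    (u := fun x => (ψ x : ℂ)) (u' := fun x => (ψ' x : ℂ))
    (v := fun c => ∫ x in a..c, f x) (v' := f)
    (by rw [u]; exact Complex.continuous_ofReal.comp_continuousOn cψ) (by rw [u]; exact cG)
    (fun x hx => (hψ x (by
      rw [min_eq_left hab, max_eq_right hab] at hx; exact ⟨hx.1.le, hx.2.le⟩)).ofReal_comp) hd
    ((Complex.continuous_ofReal.comp_continuousOn hψ').intervalIntegrable_of_Icc hab)
    (hf.intervalIntegrable_of_Icc hab)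
  rw [key]
  have h2 : ‖∫ x in a..b, (ψ' x : ℂ) * ∫ y in a..x, f y‖ ≤ ∫ x in a..b, (σ * ψ' x) * B := by
    refine intervalIntegral.norm_integral_le_of_norm_le hab ?_
      (((continuousOn_const.mul hψ').mul continuousOn_const).intervalIntegrable_of_Icc hab)
    refine Filter.Eventually.of_forall fun x hx => ?_
    have hx' : x ∈ Set.Icc a b := ⟨hx.1.le, hx.2⟩
    have h0 := hsgn x hx'
    rw [norm_mul, Complex.norm_real, Real.norm_eq_abs]
    refine mul_le_mul ?_ (hB x hx') (norm_nonneg _) h0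
    rcases hσ with rfl | rfl
    · rw [abs_of_nonneg (by linarith)]; linarith
    · rw [abs_of_nonpos (by linarith)]; linarith
  rw [intervalIntegral.integral_mul_const, intervalIntegral.integral_const_mul,
    intervalIntegral.integral_eq_sub_of_hasDerivAt (fun x hx => hψ x (u ▸ hx))
      (hψ'.intervalIntegrable_of_Icc hab)] at h2
  simp only [intervalIntegral.integral_same, mul_zero, sub_zero]
  refine (norm_sub_le _ _).trans ?_
  rw [norm_mul, Complex.norm_real, Real.norm_eq_abs, add_mul]
  gcongr
  exact hB b ⟨hab, le_rfl⟩

/-! ### The reduced oscillatory integral -/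

/-- Uniform bound for the oscillatory integral with phase `τx³ + Ax - b/x`. -/
lemma osc_phase {τ A b : ℝ} (hτ : 0 < τ) (hb : 0 ≤ b) {u v : ℝ} (hu : 0 < u) (huv : u ≤ v) :
    ‖∫ x in u..v, Complex.exp (((τ * x ^ 3 + A * x - b * x⁻¹ : ℝ) : ℂ) * Complex.I)‖ ≤
      8 * τ ^ (-(1 / 3 : ℝ)) := by
  have hpos : ∀ x ∈ Set.Icc u v, 0 < x := fun x hx => hu.trans_le hx.1
  have hδ : 0 < τ ^ (-(1 / 3 : ℝ)) := Real.rpow_pos_of_pos hτ _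
  set δ := τ ^ (-(1 / 3 : ℝ)) with hδd
  have hδ3 : τ * δ * δ * δ = 1 := by
    have : δ * δ * δ = τ⁻¹ := by
      rw [hδd, ← Real.rpow_add hτ, ← Real.rpow_add hτ, ← Real.rpow_neg_one]; norm_num
    rw [mul_assoc, mul_assoc, ← mul_assoc δ, this, mul_inv_cancel₀ hτ.ne']
  have h := vdc_three (p := fun x => τ * x ^ 3 + A * x - b * x⁻¹)
    (p1 := fun x => 3 * τ * x ^ 2 + A + b * (x ^ 2)⁻¹)
    (p2 := fun x => 6 * τ * x - 2 * b * (x ^ 3)⁻¹)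
    (p3 := fun x => 6 * τ + 6 * b * (x ^ 4)⁻¹) (ν := 6 * τ) (δ := δ) huv (by positivity) hδ
    (fun x hx => by
      have hx := (hpos x hx).ne'
      refine ((((hasDerivAt_id x).pow 3).const_mul τ).add ((hasDerivAt_id x).const_mul A)).sub
        ((hasDerivAt_inv hx).const_mul b) |>.congr_deriv ?_
      simp; ring)
    (fun x hx => by
      have hx := (hpos x hx).ne'
      refine ((((hasDerivAt_id x).pow 2).const_mul (3 * τ)).add_const A).add
        ((((hasDerivAt_id x).pow 2).inv (by simpa using hx)).const_mul b) |>.congr_deriv ?_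
      simp; field_simp; ring)
    (fun x hx => by
      have hx := (hpos x hx).ne'
      refine (((hasDerivAt_id x).const_mul (6 * τ))).sub
        ((((hasDerivAt_id x).pow 3).inv (by simpa using hx)).const_mul (2 * b)) |>.congr_deriv ?_
      simp; field_simp; ring)
    (fun x hx => by
      have hx := hpos x hx
      have : 0 ≤ 6 * b * (x ^ 4)⁻¹ := by positivity
      linarith)
  refine h.trans (le_of_eq ?_)
  have : 3 / (6 * τ * δ * δ) = δ / 2 := by
    field_simp
    linarith
  rw [this]; ring

/-- The one-dimensional oscillatory integral to which the dispersive estimate reduces: the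
amplitude `x^{-β} e^{-c/x}` is a product of two monotone factors, and near the origin absolute
values suffice. -/
lemma osc_kernel {τ A b c ε R β : ℝ} (hτ : 0 < τ) (hb : 0 ≤ b) (hc : 0 ≤ c) (hε : 0 < ε)
    (hεR : ε ≤ R) (hβ : 0 ≤ β) (hβ1 : β < 1) :
    ‖∫ x in ε..R, ((x ^ (-β) : ℝ) : ℂ) * ((Real.exp (-c * x⁻¹) : ℝ) *
      Complex.exp (((τ * x ^ 3 + A * x - b * x⁻¹ : ℝ) : ℂ) * Complex.I))‖ ≤
      (1 / (1 - β) + 16) * τ ^ (-((1 - β) / 3)) := by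
  -- the natural length scale of the phase `τx³`, at which trivial and oscillatory bounds balance
  set δ := τ ^ (-(1 / 3 : ℝ)) with hδd
  have hδ : 0 < δ := Real.rpow_pos_of_pos hτ _
  have hδβ : τ ^ (-((1 - β) / 3)) = δ ^ (1 - β) := by
    rw [hδd, ← Real.rpow_mul hτ.le]; congr 1; ring
  rw [hδβ]
  set f : ℝ → ℂ := fun x => Complex.exp (((τ * x ^ 3 + A * x - b * x⁻¹ : ℝ) : ℂ) * Complex.I)
  have nf : ∀ x, ‖f x‖ = 1 := fun x => Complex.norm_exp_ofReal_mul_I _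
  have hne : ∀ x ∈ Set.Icc ε R, x ≠ 0 := fun x hx => (hε.trans_le hx.1).ne'
  have cinv : ContinuousOn (fun x : ℝ => x⁻¹) (Set.Icc ε R) := continuousOn_inv₀.mono hne
  have cf : ContinuousOn f (Set.Icc ε R) := by fun_prop
  have cψ : ContinuousOn (fun x : ℝ => Real.exp (-c * x⁻¹)) (Set.Icc ε R) := by fun_prop
  have cr : ∀ r : ℝ, ContinuousOn (fun x : ℝ => x ^ r) (Set.Icc ε R) := fun r x hx =>
    (Real.continuousAt_rpow_const x r (Or.inl (hne x hx))).continuousWithinAt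
  have cg : ContinuousOn (fun x => ((Real.exp (-c * x⁻¹) : ℝ) : ℂ) * f x) (Set.Icc ε R) :=
    (Complex.continuous_ofReal.comp_continuousOn cψ).mul cf
  have ct : ContinuousOn (fun x => ((x ^ (-β) : ℝ) : ℂ) * (((Real.exp (-c * x⁻¹) : ℝ) : ℂ) * f x))
    (Set.Icc ε R) := (Complex.continuous_ofReal.comp_continuousOn (cr _)).mul cg
  have low : ∀ u v, ε ≤ u → u ≤ v → v ≤ R → v ≤ δ →
      ‖∫ x in u..v, ((x ^ (-β) : ℝ) : ℂ) * (((Real.exp (-c * x⁻¹) : ℝ) : ℂ) * f x)‖ ≤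
        1 / (1 - β) * δ ^ (1 - β) := by
    intro u v hu huv hv hvδ
    have : ‖∫ x in u..v, ((x ^ (-β) : ℝ) : ℂ) * (((Real.exp (-c * x⁻¹) : ℝ) : ℂ) * f x)‖ ≤
        ∫ x in u..v, x ^ (-β) := by
      refine intervalIntegral.norm_integral_le_of_norm_le huv ?_
        (((cr _).mono (Set.Icc_subset_Icc hu hv)).intervalIntegrable_of_Icc huv)
      refine Filter.Eventually.of_forall fun x hx => ?_
      have hx0 : 0 < x := by linarith [hx.1]
      rw [norm_mul, norm_mul, nf, mul_one, Complex.norm_real, Complex.norm_real, Real.norm_eq_abs,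
        Real.norm_eq_abs, abs_of_pos (Real.rpow_pos_of_pos hx0 _), Real.abs_exp]
      refine mul_le_of_le_one_right (Real.rpow_pos_of_pos hx0 _).le (Real.exp_le_one_iff.2 ?_)
      have : 0 ≤ c * x⁻¹ := by positivity
      linarith
    refine this.trans ?_
    rw [integral_rpow (Or.inl (by linarith)), neg_add_eq_sub, div_eq_inv_mul, one_div]
    have hu0 : 0 < u := by linarith
    refine mul_le_mul_of_nonneg_left ?_ (inv_nonneg.2 (by linarith))
    have h1 : v ^ (1 - β) ≤ δ ^ (1 - β) :=
      Real.rpow_le_rpow (by linarith) hvδ (by linarith)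
    linarith [Real.rpow_pos_of_pos hu0 (1 - β)]
  have high : ∀ u v, ε ≤ u → u ≤ v → v ≤ R → δ ≤ u →
      ‖∫ x in u..v, ((x ^ (-β) : ℝ) : ℂ) * (((Real.exp (-c * x⁻¹) : ℝ) : ℂ) * f x)‖ ≤
        16 * δ ^ (1 - β) := by
    intro u v hu huv hv hδu
    have hu0 : 0 < u := by linarith
    have hs : Set.Icc u v ⊆ Set.Icc ε R := Set.Icc_subset_Icc hu hv
    have step1 : ∀ w ∈ Set.Icc u v,
        ‖∫ x in u..w, ((Real.exp (-c * x⁻¹) : ℝ) : ℂ) * f x‖ ≤ 16 * δ := by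
      intro w hw
      have hs' : Set.Icc u w ⊆ Set.Icc ε R := (Set.Icc_subset_Icc le_rfl hw.2).trans hs
      have := norm_integral_amplitude_le (ψ := fun x => Real.exp (-c * x⁻¹))
        (ψ' := fun x => Real.exp (-c * x⁻¹) * (c * (x ^ 2)⁻¹)) (f := f) (σ := 1) (B := 8 * δ) hw.1
        (fun x hx => by
          refine ((hasDerivAt_inv (hne x (hs' hx))).const_mul (-c)).exp.congr_deriv ?_
          ring)
        ((cψ.mono hs').mul (continuousOn_const.mul
          (((continuousOn_id.pow 2).inv₀ (fun x hx => pow_ne_zero 2 (hne x (hs' hx)))))))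
        (cf.mono hs') (Or.inl rfl) (fun x hx => by
          have := hε.trans_le (hs' hx).1
          positivity)
        (fun z hz => osc_phase hτ hb hu0 hz.1)
      refine this.trans ?_
      have hw0 : 0 < w := hu0.trans_le hw.1
      have e1 : Real.exp (-c * w⁻¹) ≤ 1 := Real.exp_le_one_iff.2 (by
        have : 0 ≤ c * w⁻¹ := by positivity
        linarith)
      have e2 := Real.exp_pos (-c * u⁻¹)
      rw [Real.abs_exp]
      nlinarith
    have := norm_integral_amplitude_le (ψ := fun x => x ^ (-β))
      (ψ' := fun x => -β * x ^ (-β - 1)) (f := fun x => ((Real.exp (-c * x⁻¹) : ℝ) : ℂ) * f x)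
      (σ := -1) (B := 16 * δ) huv
      (fun x hx => Real.hasDerivAt_rpow_const (Or.inl (hne x (hs hx))))
      (continuousOn_const.mul ((cr _).mono hs)) (cg.mono hs) (Or.inr rfl)
      (fun x hx => by
        have := Real.rpow_pos_of_pos (hε.trans_le (hs hx).1) (-β - 1)
        have := mul_nonneg hβ this.le
        linarith)
      step1
    refine this.trans ?_
    rw [abs_of_pos (Real.rpow_pos_of_pos (by linarith) _)]
    have h1 : u ^ (-β) ≤ δ ^ (-β) := Real.rpow_le_rpow_of_nonpos hδ hδu (by linarith)
    have h2 : δ ^ (1 - β) = δ ^ (-β) * δ := by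
      rw [← Real.rpow_add_one hδ.ne']; congr 1; ring
    rw [h2]
    nlinarith
  have hδ' : 0 < δ ^ (1 - β) := Real.rpow_pos_of_pos hδ _
  have h1β : 0 < 1 / (1 - β) := one_div_pos.2 (by linarith)
  have p1 := mul_pos h1β hδ'
  rw [add_mul]
  rcases le_total R δ with h | h
  · exact (low ε R le_rfl hεR le_rfl h).trans (by linarith)
  rcases le_total δ ε with h' | h'
  · exact (high ε R le_rfl hεR le_rfl h').trans (by linarith)
  rw [← intervalIntegral.integral_add_adjacent_intervals (b := δ)
    ((ct.mono (Set.Icc_subset_Icc le_rfl h)).intervalIntegrable_of_Icc h')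
    ((ct.mono (Set.Icc_subset_Icc h' le_rfl)).intervalIntegrable_of_Icc h)]
  exact (norm_add_le _ _).trans
    (add_le_add (low ε δ le_rfl h' h le_rfl) (high δ R h' h le_rfl le_rfl))

/-! ### The dispersive estimate -/

/-- The phase `2π x·ξ + t ξ₁ |ξ|²` of the free evolution. -/
def zkPhase (t : ℝ) (x ξ : ℝ × ℝ) : ℝ :=
  2 * Real.pi * (x.1 * ξ.1 + x.2 * ξ.2) + t * ξ.1 * (ξ.1 ^ 2 + ξ.2 ^ 2)

/-- The oscillating factor `e^{i (2π x·ξ + t ξ₁ |ξ|²)}`. -/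
def zkExp (t : ℝ) (x ξ : ℝ × ℝ) : ℂ := Complex.exp ((zkPhase t x ξ : ℂ) * Complex.I)

lemma norm_zkExp (t : ℝ) (x ξ : ℝ × ℝ) : ‖zkExp t x ξ‖ = 1 := Complex.norm_exp_ofReal_mul_I _

lemma zkExp_neg (t : ℝ) (x ξ : ℝ × ℝ) :
    zkExp (-t) (-x) ξ = (starRingEnd ℂ) (zkExp t x ξ) := by
  rw [zkExp, zkExp, ← Complex.exp_conj]
  congr 1
  simp only [zkPhase, Prod.fst_neg, Prod.snd_neg, map_mul, Complex.conj_I, Complex.conj_ofReal]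
  push_cast
  ring

lemma zkExp_neg_freq (t : ℝ) (x ξ : ℝ × ℝ) :
    zkExp t x (-ξ) = (starRingEnd ℂ) (zkExp t x ξ) := by
  rw [← zkExp_neg, zkExp, zkExp]
  congr 3
  simp only [zkPhase, Prod.fst_neg, Prod.snd_neg]
  ring

lemma zkExp_mul_conj (t t' : ℝ) (x x' ξ : ℝ × ℝ) :
    zkExp t x ξ * (starRingEnd ℂ) (zkExp t' x' ξ) = zkExp (t - t') (x - x') ξ := by
  rw [← zkExp_neg, zkExp, zkExp, zkExp, ← Complex.exp_add, ← add_mul, ← Complex.ofReal_add]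
  congr 3
  simp only [zkPhase, Prod.fst_neg, Prod.snd_neg, Prod.fst_sub, Prod.snd_sub]
  ring

lemma continuous_zkExp : Continuous fun q : ℝ × (ℝ × ℝ) × (ℝ × ℝ) => zkExp q.1 q.2.1 q.2.2 := by
  unfold zkExp zkPhase
  fun_prop

/-- The frequency weight `1_{ε < ξ₁ ≤ R} ξ₁^{2s} e^{-δ ξ₁ ξ₂²}`. The exponent of the Gaussian
carries the factor `ξ₁` so that, after the `ξ₂` integration, the regularisation parameter enters
only through the complex number `δ - iτ`. -/
def zkWeight (s ε R δ : ℝ) (ξ : ℝ × ℝ) : ℝ :=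
  Set.indicator (Set.Ioc ε R) (fun x => x ^ (2 * s)) ξ.1 * Real.exp (-(δ * ξ.1) * ξ.2 ^ 2)

lemma zkWeight_nonneg {s ε R δ : ℝ} (hε : 0 < ε) (ξ : ℝ × ℝ) : 0 ≤ zkWeight s ε R δ ξ := by
  refine mul_nonneg (Set.indicator_nonneg (fun x hx => ?_) _) (Real.exp_pos _).le
  exact Real.rpow_nonneg (hε.le.trans hx.1.le) _

lemma measurable_zkWeight (s ε R δ : ℝ) : Measurable (zkWeight s ε R δ) := by
  unfold zkWeight
  refine Measurable.mul ?_ (by fun_prop)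
  exact ((measurable_id.pow_const (2 * s)).indicator measurableSet_Ioc).comp measurable_fst

lemma integrable_zkWeight {s ε R δ : ℝ} (hs : 0 ≤ s) (hε : 0 < ε) (hδ : 0 < δ) :
    Integrable (zkWeight s ε R δ) := by
  have h1 : Integrable (Set.indicator (Set.Ioc ε R) (fun _ : ℝ => R ^ (2 * s))) :=
    (integrable_indicator_iff measurableSet_Ioc).2 (integrableOn_const measure_Ioc_lt_top.ne)
  have h2 := h1.mul_prod (integrable_exp_neg_mul_sq (mul_pos hδ hε))
  rw [← Measure.volume_eq_prod] at h2
  refine h2.mono' (measurable_zkWeight _ _ _ _).aestronglyMeasurable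
    (Filter.Eventually.of_forall fun ξ => ?_)
  rw [Real.norm_of_nonneg (zkWeight_nonneg hε ξ), zkWeight]
  by_cases hx : ξ.1 ∈ Set.Ioc ε R
  · have hx0 : 0 < ξ.1 := hε.trans hx.1
    simp only [Set.indicator_of_mem hx]
    have h3 := Real.rpow_le_rpow hx0.le hx.2 (by linarith : 0 ≤ 2 * s)
    have h4 : -(δ * ξ.1) * ξ.2 ^ 2 ≤ -(δ * ε) * ξ.2 ^ 2 := by
      have := mul_le_mul_of_nonneg_left hx.1.le hδ.le
      nlinarith [sq_nonneg ξ.2]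
    have h5 := Real.exp_le_exp.2 h4
    exact mul_le_mul h3 h5 (Real.exp_pos _).le ((Real.rpow_nonneg hx0.le _).trans h3)
  · simp [Set.indicator_of_notMem hx]

/-- The `ξ₂` integral is an explicit complex Gaussian. -/
lemma gaussian_slice {τ δ x : ℝ} (hδ : 0 < δ) (hx : 0 < x) (y : ℝ × ℝ) :
    ∫ η : ℝ, ((Real.exp (-(δ * x) * η ^ 2) : ℝ) : ℂ) * zkExp τ y (x, η) =
      ((Real.pi : ℂ) / (δ - τ * Complex.I)) ^ (1 / 2 : ℂ) * ((x ^ (-(1 / 2 : ℝ)) : ℝ) *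
        ((Real.exp (-(Real.pi ^ 2 * y.2 ^ 2 * δ / (δ ^ 2 + τ ^ 2)) * x⁻¹) : ℝ) *
          Complex.exp (((τ * x ^ 3 + 2 * Real.pi * y.1 * x -
            Real.pi ^ 2 * y.2 ^ 2 * τ / (δ ^ 2 + τ ^ 2) * x⁻¹ : ℝ) : ℂ) * Complex.I))) := by
  have hz : (δ - τ * Complex.I : ℂ) ≠ 0 := by
    intro h
    have := congrArg Complex.re h
    simp at this
    exact hδ.ne' this
  have hz' : (δ + τ * Complex.I : ℂ) ≠ 0 := by
    intro h
    have := congrArg Complex.re h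
    simp at this
    exact hδ.ne' this
  have hxc : (x : ℂ) ≠ 0 := by exact_mod_cast hx.ne'
  have h1 : ∀ η : ℝ, ((Real.exp (-(δ * x) * η ^ 2) : ℝ) : ℂ) * zkExp τ y (x, η) =
      Complex.exp (-(x * (δ - τ * Complex.I)) * (η : ℂ) ^ 2 + (2 * Real.pi * y.2 * Complex.I) * η +
        (2 * Real.pi * y.1 * x + τ * x ^ 3) * Complex.I) := by
    intro η
    rw [zkExp, Complex.ofReal_exp, ← Complex.exp_add]
    congr 1
    simp only [zkPhase]
    push_cast
    ring
  simp_rw [h1]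
  rw [integral_cexp_quadratic (by simp; positivity), neg_neg]
  have h2 : ((Real.pi : ℂ) / (x * (δ - τ * Complex.I))) ^ (1 / 2 : ℂ) =
      ((x ^ (-(1 / 2 : ℝ)) : ℝ) : ℂ) * ((Real.pi : ℂ) / (δ - τ * Complex.I)) ^ (1 / 2 : ℂ) := by
    have hxi : 0 < x⁻¹ := inv_pos.2 hx
    have hne : (Real.pi : ℂ) / (δ - τ * Complex.I) ≠ 0 :=
      div_ne_zero (by exact_mod_cast Real.pi_ne_zero) hz
    have : (Real.pi : ℂ) / (x * (δ - τ * Complex.I)) =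
        ((x⁻¹ : ℝ) : ℂ) * (Real.pi / (δ - τ * Complex.I)) := by
      push_cast; field_simp
    rw [this, Complex.cpow_def_of_ne_zero (mul_ne_zero (by exact_mod_cast hxi.ne') hne),
      Complex.log_ofReal_mul hxi hne, add_mul, Complex.exp_add,
      ← Complex.cpow_def_of_ne_zero hne]
    congr 1
    rw [Real.rpow_def_of_pos hx, Real.log_inv]
    push_cast
    congr 1
    ring
  rw [h2, mul_comm ((x ^ (-(1 / 2 : ℝ)) : ℝ) : ℂ), mul_assoc]
  congr 2
  rw [Complex.ofReal_exp, ← Complex.exp_add]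
  congr 1
  have hzz : (δ : ℂ) ^ 2 + (τ : ℂ) ^ 2 = (δ - τ * Complex.I) * (δ + τ * Complex.I) := by
    ring_nf; rw [Complex.I_sq]; ring
  push_cast
  rw [hzz]
  field_simp
  ring_nf
  simp only [Complex.I_sq, Complex.I_pow_three]
  ring

/-- The dispersive estimate for the regularised kernel, uniformly in the regularisation. -/
lemma dispersive_pos {s ε R δ τ : ℝ} (hs : 0 ≤ s) (hs1 : s < 1 / 4) (hε : 0 < ε) (hεR : ε ≤ R)
    (hδ : 0 < δ) (hτ : 0 < τ) (y : ℝ × ℝ) :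
    ‖∫ ξ : ℝ × ℝ, (zkWeight s ε R δ ξ : ℂ) * zkExp τ y ξ‖ ≤
      Real.sqrt Real.pi * (1 / (1 / 2 + 2 * s) + 16) * τ ^ (-((2 + 2 * s) / 3)) := by
  have hInt : Integrable (fun ξ : ℝ × ℝ => (zkWeight s ε R δ ξ : ℂ) * zkExp τ y ξ)
      (volume.prod volume) := by
    refine ((integrable_zkWeight hs hε hδ).ofReal (𝕜 := ℂ)).mul_bdd (c := 1) ?_
      (Filter.Eventually.of_forall fun ξ => (norm_zkExp _ _ _).le)
    exact (continuous_zkExp.comp (by fun_prop : Continuous fun ξ : ℝ × ℝ => (τ, y, ξ))).aestronglyMeasurable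
  rw [Measure.volume_eq_prod, integral_prod _ hInt]
  have h1 : ∀ x : ℝ, ∫ η : ℝ, (zkWeight s ε R δ (x, η) : ℂ) * zkExp τ y (x, η) =
      Set.indicator (Set.Ioc ε R) (fun x => ((Real.pi : ℂ) / (δ - τ * Complex.I)) ^ (1 / 2 : ℂ) *
        (((x ^ (-(1 / 2 - 2 * s)) : ℝ) : ℂ) *
        ((Real.exp (-(Real.pi ^ 2 * y.2 ^ 2 * δ / (δ ^ 2 + τ ^ 2)) * x⁻¹) : ℝ) *
          Complex.exp (((τ * x ^ 3 + 2 * Real.pi * y.1 * x -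
            Real.pi ^ 2 * y.2 ^ 2 * τ / (δ ^ 2 + τ ^ 2) * x⁻¹ : ℝ) : ℂ) * Complex.I)))) x := by
    intro x
    by_cases hx : x ∈ Set.Ioc ε R
    · have hx0 : 0 < x := hε.trans hx.1
      simp only [zkWeight, Set.indicator_of_mem hx, Complex.ofReal_mul, mul_assoc]
      rw [integral_const_mul]
      have := gaussian_slice (τ := τ) hδ hx0 y
      simp only [mul_assoc] at this
      rw [this]
      have e : x ^ (-(1 / 2 - 2 * s)) = x ^ (2 * s) * x ^ (-(1 / 2 : ℝ)) := by
        rw [← Real.rpow_add hx0]; congr 1; ring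
      rw [e]
      push_cast
      ring
    · simp [zkWeight, Set.indicator_of_notMem hx]
  simp_rw [h1]
  rw [integral_indicator measurableSet_Ioc, integral_const_mul, norm_mul,
    ← intervalIntegral.integral_of_le hεR]
  have h2 := osc_kernel (A := 2 * Real.pi * y.1) (b := Real.pi ^ 2 * y.2 ^ 2 * τ / (δ ^ 2 + τ ^ 2))
    (c := Real.pi ^ 2 * y.2 ^ 2 * δ / (δ ^ 2 + τ ^ 2)) (β := 1 / 2 - 2 * s) hτ (by positivity)
    (by positivity) hε hεR (by linarith) (by linarith)
  have h3 : ‖((Real.pi : ℂ) / (δ - τ * Complex.I)) ^ (1 / 2 : ℂ)‖ ≤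
      Real.sqrt Real.pi * τ ^ (-(1 / 2 : ℝ)) := by
    have : (1 / 2 : ℂ) = ((1 / 2 : ℝ) : ℂ) := by push_cast; rfl
    rw [this, Complex.norm_cpow_real, Real.sqrt_eq_rpow, Real.rpow_neg hτ.le, ← div_eq_mul_inv,
      ← Real.div_rpow Real.pi_pos.le hτ.le]
    refine Real.rpow_le_rpow (norm_nonneg _) ?_ (by norm_num)
    rw [norm_div, Complex.norm_real, Real.norm_eq_abs, abs_of_pos Real.pi_pos]
    refine div_le_div_of_nonneg_left Real.pi_pos.le hτ ?_
    have := Complex.abs_im_le_norm (δ - τ * Complex.I : ℂ)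
    simp at this
    exact (le_abs_self τ).trans this
  refine (mul_le_mul h3 h2 (norm_nonneg _) (by positivity)).trans (le_of_eq ?_)
  have e : τ ^ (-((2 + 2 * s) / 3)) = τ ^ (-(1 / 2 : ℝ)) * τ ^ (-((1 - (1 / 2 - 2 * s)) / 3)) := by
    rw [← Real.rpow_add hτ]; congr 1; ring
  rw [e, show 1 - (1 / 2 - 2 * s) = 1 / 2 + 2 * s by ring]
  ring

/-- Negative times follow by complex conjugation. -/
lemma dispersive {s ε R δ τ : ℝ} (hs : 0 ≤ s) (hs1 : s < 1 / 4) (hε : 0 < ε) (hεR : ε ≤ R)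
    (hδ : 0 < δ) (hτ : τ ≠ 0) (y : ℝ × ℝ) :
    ‖∫ ξ : ℝ × ℝ, (zkWeight s ε R δ ξ : ℂ) * zkExp τ y ξ‖ ≤
      Real.sqrt Real.pi * (1 / (1 / 2 + 2 * s) + 16) * |τ| ^ (-((2 + 2 * s) / 3)) := by
  rcases lt_or_gt_of_ne hτ with h | h
  · have := dispersive_pos hs hs1 hε hεR hδ (neg_pos.2 h) (-y)
    rw [abs_of_neg h]
    convert this using 1
    rw [← Complex.norm_conj, ← integral_conj]
    simp [zkExp_neg]
  · rw [abs_of_pos h]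
    exact dispersive_pos hs hs1 hε hεR hδ h y

/-! ### The dual operator along a curve -/

/-- The dual operator of the evolution restricted to the curve `t ↦ (t, X t)`, on the frequency
side: `F(ξ) = ∫₀¹ w(t) e^{i (2π X(t)·ξ + t ξ₁ |ξ|²)} dt`. -/
def zkDual (w : ℝ → ℂ) (X : ℝ → ℝ × ℝ) (ξ : ℝ × ℝ) : ℂ :=
  ∫ t in Set.Icc (0 : ℝ) 1, w t * zkExp t (X t) ξ

/-- The kernel `|τ|^{-α}`, with value `∞` at `τ = 0`. -/
def singK (α τ : ℝ) : ℝ≥0∞ := (ENNReal.ofReal |τ|) ^ (-α)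

lemma measurable_singK (α : ℝ) : Measurable (singK α) := by
  unfold singK
  fun_prop

lemma measurable_zkExp_curve {X : ℝ → ℝ × ℝ} (hX : Measurable X) :
    Measurable fun q : (ℝ × ℝ) × ℝ => zkExp q.2 (X q.2) q.1 :=
  continuous_zkExp.measurable.comp
    (measurable_snd.prodMk ((hX.comp measurable_snd).prodMk measurable_fst))

lemma measurable_zkDual {w : ℝ → ℂ} {X : ℝ → ℝ × ℝ} (hw : Measurable w) (hX : Measurable X) :
    Measurable (zkDual w X) := by
  unfold zkDual
  have : Measurable fun q : (ℝ × ℝ) × ℝ => w q.2 * zkExp q.2 (X q.2) q.1 :=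
    (hw.comp measurable_snd).mul (measurable_zkExp_curve hX)
  exact (this.stronglyMeasurable.integral_prod_right
    (ν := volume.restrict (Set.Icc (0 : ℝ) 1))).measurable

lemma norm_zkDual_le {w : ℝ → ℂ} {X : ℝ → ℝ × ℝ} {M : ℝ} (hM : ∀ t, ‖w t‖ ≤ M) (ξ : ℝ × ℝ) :
    ‖zkDual w X ξ‖ ≤ M := by
  have := norm_setIntegral_le_of_norm_le_const (μ := volume) (s := Set.Icc (0 : ℝ) 1) (C := M)
    (f := fun t => w t * zkExp t (X t) ξ) (by simp)
    (fun t _ => by rw [norm_mul, norm_zkExp, mul_one]; exact hM t)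
  simpa [zkDual] using this

/-- The `TT*` identity and the dispersive estimate, with the regularised weight. -/
lemma energy_reg {w : ℝ → ℂ} {X : ℝ → ℝ × ℝ} {M : ℝ} (hw : Measurable w) (hX : Measurable X)
    (hM : ∀ t, ‖w t‖ ≤ M) {s ε R δ : ℝ} (hs : 0 ≤ s) (hs1 : s < 1 / 4) (hε : 0 < ε) (hεR : ε ≤ R)
    (hδ : 0 < δ) :
    ∫⁻ ξ : ℝ × ℝ, ENNReal.ofReal (zkWeight s ε R δ ξ) * ‖zkDual w X ξ‖ₑ ^ 2 ≤
      ENNReal.ofReal (Real.sqrt Real.pi * (1 / (1 / 2 + 2 * s) + 16)) *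
        ∫⁻ q : ℝ × ℝ, ‖w q.1‖ₑ * ‖w q.2‖ₑ * singK ((2 + 2 * s) / 3) (q.1 - q.2)
          ∂((volume.restrict (Set.Icc (0 : ℝ) 1)).prod (volume.restrict (Set.Icc (0 : ℝ) 1))) := by
  set ν : Measure ℝ := volume.restrict (Set.Icc (0 : ℝ) 1) with hν
  set F := zkDual w X with hF
  have mF : Measurable F := measurable_zkDual hw hX
  have hM0 : 0 ≤ M := (norm_nonneg _).trans (hM 0)
  have iW := integrable_zkWeight (R := R) hs hε hδ
  have iWF : Integrable (fun ξ => zkWeight s ε R δ ξ * ‖F ξ‖ ^ 2) :=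
    iW.mul_bdd (c := M ^ 2) (mF.norm.pow_const 2).aestronglyMeasurable
      (Filter.Eventually.of_forall fun ξ => by
        rw [Real.norm_of_nonneg (by positivity)]
        exact pow_le_pow_left₀ (norm_nonneg _) (norm_zkDual_le hM ξ) 2)
  -- the left-hand side is the modulus of a complex integral
  have hL : ∫⁻ ξ : ℝ × ℝ, ENNReal.ofReal (zkWeight s ε R δ ξ) * ‖F ξ‖ₑ ^ 2 =
      ‖∫ ξ : ℝ × ℝ, (zkWeight s ε R δ ξ : ℂ) * (F ξ * (starRingEnd ℂ) (F ξ))‖ₑ := by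
    have h1 : ∀ ξ, (zkWeight s ε R δ ξ : ℂ) * (F ξ * (starRingEnd ℂ) (F ξ)) =
        ((zkWeight s ε R δ ξ * ‖F ξ‖ ^ 2 : ℝ) : ℂ) := by
      intro ξ
      rw [RCLike.mul_conj]; push_cast; rfl
    have h0 : ∀ ξ, 0 ≤ zkWeight s ε R δ ξ * ‖F ξ‖ ^ 2 := fun ξ =>
      mul_nonneg (zkWeight_nonneg hε ξ) (by positivity)
    simp_rw [h1]
    rw [integral_complex_ofReal, ← ofReal_norm, Complex.norm_real,
      Real.norm_of_nonneg (integral_nonneg h0), ofReal_integral_eq_lintegral_ofReal iWF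
        (Filter.Eventually.of_forall h0)]
    refine lintegral_congr fun ξ => ?_
    rw [ENNReal.ofReal_mul (zkWeight_nonneg hε ξ), ENNReal.ofReal_pow (norm_nonneg _),
      ofReal_norm]
  set G : ℝ × ℝ → ℝ × ℝ → ℂ := fun q ξ =>
    (w q.1 * (starRingEnd ℂ) (w q.2)) * zkExp (q.1 - q.2) (X q.1 - X q.2) ξ with hG
  have hFF : ∀ ξ, F ξ * (starRingEnd ℂ) (F ξ) = ∫ q, G q ξ ∂(ν.prod ν) := by
    intro ξ
    rw [hF, zkDual, ← integral_conj, ← integral_prod_mul]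
    refine integral_congr_ae (Filter.Eventually.of_forall fun q => ?_)
    simp only [hG, map_mul]
    rw [← zkExp_mul_conj]
    ring
  have mG : Measurable fun r : (ℝ × ℝ) × (ℝ × ℝ) => G r.2 r.1 := by
    have m1 : Measurable fun r : (ℝ × ℝ) × (ℝ × ℝ) => w r.2.1 := by fun_prop
    have m2 : Measurable fun r : (ℝ × ℝ) × (ℝ × ℝ) => (starRingEnd ℂ) (w r.2.2) :=
      Complex.continuous_conj.measurable.comp (by fun_prop)
    refine (m1.mul m2).mul (continuous_zkExp.measurable.comp
      (f := fun r : (ℝ × ℝ) × (ℝ × ℝ) => (r.2.1 - r.2.2, X r.2.1 - X r.2.2, r.1)) ?_)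
    fun_prop
  have hInt : Integrable (Function.uncurry fun ξ q => (zkWeight s ε R δ ξ : ℂ) * G q ξ)
      ((volume : Measure (ℝ × ℝ)).prod (ν.prod ν)) := by
    have h1 : Integrable (fun r : (ℝ × ℝ) × (ℝ × ℝ) => (zkWeight s ε R δ r.1 : ℂ) * (1 : ℂ))
        ((volume : Measure (ℝ × ℝ)).prod (ν.prod ν)) :=
      (iW.ofReal (𝕜 := ℂ)).mul_prod (integrable_const (1 : ℂ))
    simp only [mul_one] at h1
    refine h1.mul_bdd (c := M * M) mG.aestronglyMeasurable
      (Filter.Eventually.of_forall fun r => ?_)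
    simp only [hG, norm_mul, norm_zkExp, mul_one, RCLike.norm_conj]
    exact mul_le_mul (hM _) (hM _) (norm_nonneg _) hM0
  rw [hL]
  have hswap : ∫ ξ : ℝ × ℝ, (zkWeight s ε R δ ξ : ℂ) * (F ξ * (starRingEnd ℂ) (F ξ)) =
      ∫ q, (w q.1 * (starRingEnd ℂ) (w q.2)) * (∫ ξ : ℝ × ℝ, (zkWeight s ε R δ ξ : ℂ) *
        zkExp (q.1 - q.2) (X q.1 - X q.2) ξ) ∂(ν.prod ν) := by
    simp_rw [hFF, ← integral_const_mul]
    rw [integral_integral_swap hInt]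
    refine integral_congr_ae (Filter.Eventually.of_forall fun q => ?_)
    refine integral_congr_ae (Filter.Eventually.of_forall fun ξ => ?_)
    simp only [hG]
    ring
  rw [hswap, ← lintegral_const_mul']
  swap
  · exact ENNReal.ofReal_ne_top
  refine (enorm_integral_le_lintegral_enorm _).trans (lintegral_mono fun q => ?_)
  rw [enorm_mul, enorm_mul, RCLike.enorm_conj, mul_left_comm]
  gcongr
  by_cases hq : q.1 - q.2 = 0
  · have : singK ((2 + 2 * s) / 3) (q.1 - q.2) = ⊤ := by
      rw [singK, hq, abs_zero, ENNReal.ofReal_zero, ENNReal.zero_rpow_of_neg (by linarith)]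
    rw [this, ENNReal.mul_top]
    · exact le_top
    · have : 0 < Real.sqrt Real.pi * (1 / (1 / 2 + 2 * s) + 16) := by positivity
      exact (ENNReal.ofReal_pos.2 this).ne'
  · rw [singK, ENNReal.ofReal_rpow_of_pos (abs_pos.2 hq), ← ENNReal.ofReal_mul (by positivity),
      ← ofReal_norm]
    exact ENNReal.ofReal_le_ofReal (dispersive hs hs1 hε hεR hδ hq _)

/-- The weight `1_{ξ₁ > 0} ξ₁^{2s}`, in `[0, ∞]`. -/
def halfWeight (s : ℝ) (ξ : ℝ × ℝ) : ℝ≥0∞ :=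
  ENNReal.ofReal (Set.indicator (Set.Ioi 0) (fun x => x ^ (2 * s)) ξ.1)

open Filter Topology in
lemma tendsto_zkWeight (s : ℝ) (ξ : ℝ × ℝ) :
    Tendsto (fun n : ℕ => ENNReal.ofReal
      (zkWeight s (1 / ((n : ℝ) + 1)) ((n : ℝ) + 1) (1 / ((n : ℝ) + 1)) ξ)) atTop
      (𝓝 (halfWeight s ξ)) := by
  have t0 : Tendsto (fun n : ℕ => 1 / ((n : ℝ) + 1)) atTop (𝓝 0) :=
    tendsto_one_div_add_atTop_nhds_zero_nat
  refine (ENNReal.continuous_ofReal.tendsto _).comp ?_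
  by_cases h : 0 < ξ.1
  · rw [Set.indicator_of_mem (Set.mem_Ioi.2 h)]
    have ev : ∀ᶠ n : ℕ in atTop, ξ.1 ^ (2 * s) * Real.exp (-(1 / ((n : ℝ) + 1) * ξ.1) * ξ.2 ^ 2) =
        zkWeight s (1 / ((n : ℝ) + 1)) ((n : ℝ) + 1) (1 / ((n : ℝ) + 1)) ξ := by
      filter_upwards [t0.eventually (gt_mem_nhds h),
        tendsto_natCast_atTop_atTop.eventually_ge_atTop ξ.1] with n h1 h2
      rw [zkWeight, Set.indicator_of_mem
        (show ξ.1 ∈ Set.Ioc (1 / ((n : ℝ) + 1)) ((n : ℝ) + 1) from ⟨h1, by linarith⟩)]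
    refine Tendsto.congr' ev ?_
    have : Tendsto (fun n : ℕ => ξ.1 ^ (2 * s) *
        Real.exp (-(1 / ((n : ℝ) + 1) * ξ.1) * ξ.2 ^ 2)) atTop
        (𝓝 (ξ.1 ^ (2 * s) * Real.exp (-(0 * ξ.1) * ξ.2 ^ 2))) :=
      (((t0.mul_const ξ.1).neg.mul_const _).rexp).const_mul _
    simpa using this
  · rw [Set.indicator_of_notMem (by simpa using h)]
    refine tendsto_const_nhds.congr fun n => ?_
    rw [zkWeight, Set.indicator_of_notMem, zero_mul]
    intro hx
    exact h (lt_trans (by positivity) hx.1)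

open Filter Topology in
/-- The regularisation is removed by Fatou's lemma. -/
lemma energy_half {w : ℝ → ℂ} {X : ℝ → ℝ × ℝ} {M : ℝ} (hw : Measurable w) (hX : Measurable X)
    (hM : ∀ t, ‖w t‖ ≤ M) {s : ℝ} (hs : 0 ≤ s) (hs1 : s < 1 / 4) :
    ∫⁻ ξ : ℝ × ℝ, halfWeight s ξ * ‖zkDual w X ξ‖ₑ ^ 2 ≤
      ENNReal.ofReal (Real.sqrt Real.pi * (1 / (1 / 2 + 2 * s) + 16)) *
        ∫⁻ q : ℝ × ℝ, ‖w q.1‖ₑ * ‖w q.2‖ₑ * singK ((2 + 2 * s) / 3) (q.1 - q.2)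
          ∂((volume.restrict (Set.Icc (0 : ℝ) 1)).prod (volume.restrict (Set.Icc (0 : ℝ) 1))) := by
  have mF := measurable_zkDual hw hX
  have h1 : ∀ ξ, halfWeight s ξ * ‖zkDual w X ξ‖ₑ ^ 2 = liminf (fun n : ℕ => ENNReal.ofReal
      (zkWeight s (1 / ((n : ℝ) + 1)) ((n : ℝ) + 1) (1 / ((n : ℝ) + 1)) ξ) *
        ‖zkDual w X ξ‖ₑ ^ 2) atTop := by
    intro ξ
    refine (Tendsto.liminf_eq ?_).symm
    exact ENNReal.Tendsto.mul_const (tendsto_zkWeight s ξ) (Or.inr (by finiteness))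
  simp_rw [h1]
  refine (lintegral_liminf_le fun n => ?_).trans ?_
  · exact (measurable_zkWeight _ _ _ _).ennreal_ofReal.mul (mF.enorm.pow_const 2)
  · refine liminf_le_of_frequently_le' (Frequently.of_forall fun n => ?_)
    have : 1 / ((n : ℝ) + 1) ≤ (n : ℝ) + 1 := by
      have : (0 : ℝ) ≤ n := n.cast_nonneg
      rw [div_le_iff₀ (by positivity)]
      nlinarith
    exact energy_reg hw hX hM hs hs1 (by positivity) this (by positivity)

/-- The two half-planes are exchanged by `ξ ↦ -ξ`, which replaces `w` by its conjugate. -/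
lemma energy_full {w : ℝ → ℂ} {X : ℝ → ℝ × ℝ} {M : ℝ} (hw : Measurable w) (hX : Measurable X)
    (hM : ∀ t, ‖w t‖ ≤ M) {s : ℝ} (hs : 0 ≤ s) (hs1 : s < 1 / 4) :
    ∫⁻ ξ : ℝ × ℝ, ENNReal.ofReal (|ξ.1| ^ s) ^ 2 * ‖zkDual w X ξ‖ₑ ^ 2 ≤
      2 * ENNReal.ofReal (Real.sqrt Real.pi * (1 / (1 / 2 + 2 * s) + 16)) *
        ∫⁻ q : ℝ × ℝ, ‖w q.1‖ₑ * ‖w q.2‖ₑ * singK ((2 + 2 * s) / 3) (q.1 - q.2)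
          ∂((volume.restrict (Set.Icc (0 : ℝ) 1)).prod (volume.restrict (Set.Icc (0 : ℝ) 1))) := by
  set w' : ℝ → ℂ := fun t => (starRingEnd ℂ) (w t) with hw'
  have mw' : Measurable w' := Complex.continuous_conj.measurable.comp hw
  have mH : Measurable (halfWeight s) := by
    unfold halfWeight
    exact (((measurable_id.pow_const (2 * s)).indicator measurableSet_Ioi).comp
      measurable_fst).ennreal_ofReal
  have e1 := energy_half hw hX hM hs hs1
  have e2 := energy_half mw' hX (M := M) (fun t => by simpa [hw'] using hM t) hs hs1
  have hconj : ∀ ξ, ‖zkDual w' X (-ξ)‖ₑ = ‖zkDual w X ξ‖ₑ := by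
    intro ξ
    rw [zkDual, zkDual, ← RCLike.enorm_conj (∫ t in Set.Icc (0 : ℝ) 1, w t * zkExp t (X t) ξ),
      ← integral_conj]
    simp [zkExp_neg_freq, hw']
  have e3 : ∫⁻ ξ : ℝ × ℝ, halfWeight s ξ * ‖zkDual w' X ξ‖ₑ ^ 2 =
      ∫⁻ ξ : ℝ × ℝ, halfWeight s (-ξ) * ‖zkDual w X ξ‖ₑ ^ 2 := by
    rw [← lintegral_neg_eq_self]
    simp_rw [hconj]
  rw [e3] at e2
  have hae : ∀ᵐ ξ : ℝ × ℝ, ξ.1 ≠ 0 := by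
    have := Measure.quasiMeasurePreserving_fst (μ := (volume : Measure ℝ)) (ν := (volume : Measure ℝ))
    exact this.ae (Measure.ae_ne volume (0:ℝ))
  calc _ = ∫⁻ ξ : ℝ × ℝ, (halfWeight s ξ * ‖zkDual w X ξ‖ₑ ^ 2 +
        halfWeight s (-ξ) * ‖zkDual w X ξ‖ₑ ^ 2) := by
        refine lintegral_congr_ae ?_
        filter_upwards [hae] with ξ hξ
        rw [← add_mul]
        congr 1
        rw [← ENNReal.ofReal_pow (by positivity), ← Real.rpow_natCast, ← Real.rpow_mul (abs_nonneg _)]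
        rcases lt_or_gt_of_ne hξ with h | h
        · simp only [halfWeight, Prod.fst_neg]
          rw [Set.indicator_of_notMem (by simpa using h.le), Set.indicator_of_mem (by simpa using h),
            abs_of_neg h, mul_comm]
          simp
        · simp only [halfWeight, Prod.fst_neg]
          rw [Set.indicator_of_mem (by simpa using h), Set.indicator_of_notMem (by simpa using h.le),
            abs_of_pos h, mul_comm]
          simp
    _ = _ := lintegral_add_left (mH.mul ((measurable_zkDual hw hX).enorm.pow_const 2)) _
    _ ≤ _ := by
        refine (add_le_add e1 e2).trans (le_of_eq ?_)
        simp only [hw', RCLike.enorm_conj]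
        ring

/-! ### Young's inequality in time -/

lemma singK_neg (α τ : ℝ) : singK α (-τ) = singK α τ := by rw [singK, singK, abs_neg]

/-- The total mass on `[-1, 1]` of the kernel `|τ|^{-α}` raised to the power `9/8`. -/
def singMass (α : ℝ) : ℝ≥0∞ := ∫⁻ τ in Set.Icc (-1 : ℝ) 1, singK α τ ^ ((9 : ℝ) / 8)

lemma singMass_lt_top {α : ℝ} (hα : α * (9 / 8) < 1) : singMass α < ⊤ := by
  have h0 : ∫⁻ τ in Set.Ioc (0 : ℝ) 1, singK α τ ^ ((9 : ℝ) / 8) < ⊤ := by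
    have h1 := (intervalIntegral.intervalIntegrable_rpow' (a := 0) (b := 1)
      (r := -(α * (9 / 8))) (by linarith))
    rw [intervalIntegrable_iff_integrableOn_Ioc_of_le zero_le_one] at h1
    refine lt_of_le_of_lt (le_of_eq ?_) h1.2
    refine setLIntegral_congr_fun measurableSet_Ioc fun τ hτ => ?_
    have h2 : 0 < τ := hτ.1
    simp only
    rw [singK, ← ENNReal.rpow_mul, abs_of_pos h2, ENNReal.ofReal_rpow_of_pos h2,
      ← ofReal_norm, Real.norm_of_nonneg (by positivity), neg_mul]
  have h3 : ∫⁻ τ in Set.Ico (-1 : ℝ) 0, singK α τ ^ ((9 : ℝ) / 8) < ⊤ := by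
    refine lt_of_le_of_lt (le_of_eq ?_) h0
    rw [← lintegral_indicator measurableSet_Ioc, ← lintegral_indicator measurableSet_Ico,
      ← lintegral_neg_eq_self]
    refine lintegral_congr fun τ => ?_
    have : -τ ∈ Set.Ico (-1 : ℝ) 0 ↔ τ ∈ Set.Ioc (0 : ℝ) 1 := by
      simp only [Set.mem_Ico, Set.mem_Ioc]
      constructor <;> rintro ⟨h, h'⟩ <;> constructor <;> linarith
    by_cases h : τ ∈ Set.Ioc (0 : ℝ) 1
    · rw [Set.indicator_of_mem h, Set.indicator_of_mem (this.2 h), singK_neg]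
    · rw [Set.indicator_of_notMem h, Set.indicator_of_notMem (fun h' => h (this.1 h'))]
  have h4 : ∫⁻ τ in ({0} : Set ℝ), singK α τ ^ ((9 : ℝ) / 8) < ⊤ := by simp
  refine lt_of_le_of_lt (b := ∫⁻ τ in Set.Ioc (0 : ℝ) 1 ∪ (Set.Ico (-1 : ℝ) 0 ∪ {0}),
    singK α τ ^ ((9 : ℝ) / 8)) (lintegral_mono_set ?_) ?_
  · intro τ hτ
    rcases lt_trichotomy τ 0 with h | h | h
    · exact Or.inr (Or.inl ⟨hτ.1, h⟩)
    · exact Or.inr (Or.inr h)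
    · exact Or.inl ⟨h, hτ.2⟩
  · refine (lintegral_union_le _ _ _).trans_lt (ENNReal.add_lt_top.2 ⟨h0, ?_⟩)
    exact (lintegral_union_le _ _ _).trans_lt (ENNReal.add_lt_top.2 ⟨h3, h4⟩)

lemma lintegral_singK_le (α : ℝ) {t : ℝ} (ht : t ∈ Set.Icc (0 : ℝ) 1) :
    ∫⁻ t' in Set.Icc (0 : ℝ) 1, singK α (t - t') ^ ((9 : ℝ) / 8) ≤ singMass α := by
  rw [singMass, ← lintegral_indicator measurableSet_Icc, ← lintegral_indicator measurableSet_Icc,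
    ← lintegral_sub_left_eq_self ((Set.Icc (-1 : ℝ) 1).indicator _) t]
  refine lintegral_mono fun t' => ?_
  by_cases h : t' ∈ Set.Icc (0 : ℝ) 1
  · have : t - t' ∈ Set.Icc (-1 : ℝ) 1 := ⟨by linarith [ht.1, h.2], by linarith [ht.2, h.1]⟩
    rw [Set.indicator_of_mem h, Set.indicator_of_mem this]
  · rw [Set.indicator_of_notMem h]; exact zero_le

/-- Young's inequality for the kernel `|τ|^{-α}` on the unit time interval: the bilinear form is
bounded on `L^{9/5} × L^{9/5}`. -/
lemma young_time {v : ℝ → ℝ≥0∞} (hv : Measurable v) (α : ℝ) :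
    ∫⁻ q : ℝ × ℝ, v q.1 * v q.2 * singK α (q.1 - q.2)
        ∂((volume.restrict (Set.Icc (0 : ℝ) 1)).prod (volume.restrict (Set.Icc (0 : ℝ) 1))) ≤
      singMass α ^ ((8 : ℝ) / 9) *
        (∫⁻ t in Set.Icc (0 : ℝ) 1, v t ^ ((9 : ℝ) / 5)) ^ ((10 : ℝ) / 9) := by
  set ν : Measure ℝ := volume.restrict (Set.Icc (0 : ℝ) 1) with hν
  set A := ∫⁻ t in Set.Icc (0 : ℝ) 1, v t ^ ((9 : ℝ) / 5) with hA
  set B := singMass α with hB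
  have mk : Measurable fun τ => singK α τ ^ ((9 : ℝ) / 8) := (measurable_singK α).pow_const _
  have mV : Measurable fun t => v t ^ ((9 : ℝ) / 5) := hv.pow_const _
  have mk2 : Measurable fun q : ℝ × ℝ => singK α (q.1 - q.2) ^ ((9 : ℝ) / 8) :=
    mk.comp (measurable_fst.sub measurable_snd)
  -- Hölder with exponents `9, 9/4, 9/4` applied to the standard splitting in Young's inequality
  set f1 : ℝ × ℝ → ℝ≥0∞ := fun q => v q.1 ^ ((9 : ℝ) / 5) * v q.2 ^ ((9 : ℝ) / 5) with hf1
  set f2 : ℝ × ℝ → ℝ≥0∞ := fun q => v q.1 ^ ((9 : ℝ) / 5) * singK α (q.1 - q.2) ^ ((9 : ℝ) / 8)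
    with hf2
  set f3 : ℝ × ℝ → ℝ≥0∞ := fun q => v q.2 ^ ((9 : ℝ) / 5) * singK α (q.1 - q.2) ^ ((9 : ℝ) / 8)
    with hf3
  have m1 : Measurable f1 := (mV.comp measurable_fst).mul (mV.comp measurable_snd)
  have m2 : Measurable f2 := (mV.comp measurable_fst).mul mk2
  have m3 : Measurable f3 := (mV.comp measurable_snd).mul mk2
  have i1 : ∫⁻ q, f1 q ∂(ν.prod ν) = A * A :=
    lintegral_prod_mul mV.aemeasurable mV.aemeasurable
  have key : ∀ t ∈ Set.Icc (0 : ℝ) 1, ∫⁻ t', v t ^ ((9 : ℝ) / 5) *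
      singK α (t - t') ^ ((9 : ℝ) / 8) ∂ν ≤ v t ^ ((9 : ℝ) / 5) * B := by
    intro t ht
    rw [lintegral_const_mul _ (show Measurable fun t' => singK α (t - t') ^ ((9 : ℝ) / 8) from
      mk.comp (measurable_const.sub measurable_id))]
    gcongr
    exact lintegral_singK_le α ht
  have i2 : ∫⁻ q, f2 q ∂(ν.prod ν) ≤ A * B := by
    rw [lintegral_prod _ m2.aemeasurable, hA, ← lintegral_mul_const _ mV]
    exact setLIntegral_mono' measurableSet_Icc key
  have i3 : ∫⁻ q, f3 q ∂(ν.prod ν) ≤ A * B := by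
    rw [lintegral_prod_symm _ m3.aemeasurable, hA, ← lintegral_mul_const _ mV]
    refine setLIntegral_mono' measurableSet_Icc fun t ht => ?_
    refine le_trans (le_of_eq (lintegral_congr fun t' => ?_)) (key t ht)
    simp only [hf3]
    rw [← singK_neg, neg_sub]
  have hold := ENNReal.lintegral_prod_norm_pow_le (μ := ν.prod ν) (Finset.univ : Finset (Fin 3))
    (f := ![f1, f2, f3]) (p := ![1 / 9, 4 / 9, 4 / 9])
    (by intro i _; fin_cases i; exacts [m1.aemeasurable, m2.aemeasurable, m3.aemeasurable])
    (by rw [Fin.sum_univ_three]; simp; norm_num)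
    (by intro i _; fin_cases i <;> simp <;> norm_num)
  simp only [Fin.prod_univ_three, Matrix.cons_val_zero, Matrix.cons_val_one,
    Matrix.cons_val] at hold
  calc _ = ∫⁻ q, f1 q ^ ((1 : ℝ) / 9) * f2 q ^ ((4 : ℝ) / 9) * f3 q ^ ((4 : ℝ) / 9) ∂(ν.prod ν) := by
        refine lintegral_congr fun q => ?_
        simp only [hf1, hf2, hf3]
        have e1 : ∀ x : ℝ≥0∞, x = (x ^ ((9 : ℝ) / 5)) ^ ((1 : ℝ) / 9) *
            (x ^ ((9 : ℝ) / 5)) ^ ((4 : ℝ) / 9) := by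
          intro x
          rw [← ENNReal.rpow_add_of_nonneg _ _ (by norm_num) (by norm_num), ← ENNReal.rpow_mul]
          norm_num
        have e2 : ∀ x : ℝ≥0∞, x = (x ^ ((9 : ℝ) / 8)) ^ ((4 : ℝ) / 9) *
            (x ^ ((9 : ℝ) / 8)) ^ ((4 : ℝ) / 9) := by
          intro x
          rw [← ENNReal.rpow_add_of_nonneg _ _ (by norm_num) (by norm_num), ← ENNReal.rpow_mul]
          norm_num
        rw [ENNReal.mul_rpow_of_nonneg _ _ (by norm_num), ENNReal.mul_rpow_of_nonneg _ _ (by norm_num),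
          ENNReal.mul_rpow_of_nonneg _ _ (by norm_num)]
        conv_lhs => rw [e1 (v q.1), e1 (v q.2), e2 (singK α (q.1 - q.2))]
        ring
    _ ≤ _ := hold
    _ ≤ (A * A) ^ ((1 : ℝ) / 9) * (A * B) ^ ((4 : ℝ) / 9) * (A * B) ^ ((4 : ℝ) / 9) := by
        rw [i1]; gcongr
    _ = _ := by
        have h : (0 : ℝ) ≤ 1 / 9 := by norm_num
        have h' : (0 : ℝ) ≤ 4 / 9 := by norm_num
        rw [ENNReal.mul_rpow_of_nonneg _ _ h, ENNReal.mul_rpow_of_nonneg _ _ h',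
          show (10 : ℝ) / 9 = 1 / 9 + 1 / 9 + 4 / 9 + 4 / 9 by norm_num,
          show (8 : ℝ) / 9 = 4 / 9 + 4 / 9 by norm_num,
          ENNReal.rpow_add_of_nonneg _ _ h' h',
          ENNReal.rpow_add_of_nonneg _ _ (by norm_num) h',
          ENNReal.rpow_add_of_nonneg _ _ (by norm_num) h',
          ENNReal.rpow_add_of_nonneg _ _ h h]
        ring

/-! ### The Strichartz estimate on the frequency side -/

/-- The evolution of the datum with Fourier transform `g`. -/
def zkFlow (g : ℝ × ℝ → ℂ) (t : ℝ) (x : ℝ × ℝ) : ℂ := ∫ ξ : ℝ × ℝ, zkExp t x ξ * g ξ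

lemma norm_zkFlow_le (g : ℝ × ℝ → ℂ) (t : ℝ) (x : ℝ × ℝ) : ‖zkFlow g t x‖ ≤ ∫ ξ, ‖g ξ‖ := by
  refine (norm_integral_le_integral_norm _).trans (le_of_eq ?_)
  simp [norm_zkExp]

lemma continuous_zkFlow {g : ℝ × ℝ → ℂ} (hg : Integrable g) :
    Continuous fun p : ℝ × (ℝ × ℝ) => zkFlow g p.1 p.2 := by
  unfold zkFlow
  refine continuous_of_dominated (bound := fun ξ => ‖g ξ‖) (fun p => ?_) (fun p => ?_) hg.norm ?_
  · refine AEStronglyMeasurable.mul (Continuous.aestronglyMeasurable ?_) hg.aestronglyMeasurable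
    exact continuous_zkExp.comp (by fun_prop : Continuous fun ξ : ℝ × ℝ => (p.1, p.2, ξ))
  · exact Filter.Eventually.of_forall fun ξ => by rw [norm_mul, norm_zkExp, one_mul]
  · refine Filter.Eventually.of_forall fun ξ => Continuous.mul ?_ continuous_const
    exact continuous_zkExp.comp (by fun_prop : Continuous fun p : ℝ × (ℝ × ℝ) => (p.1, p.2, ξ))

lemma measurable_zkFlow_curve {g : ℝ × ℝ → ℂ} (hg : Integrable g) {X : ℝ → ℝ × ℝ}
    (hX : Measurable X) : Measurable fun t => zkFlow g t (X t) := by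
  have h := (continuous_zkFlow hg).measurable
  have h2 : Measurable fun t : ℝ => (t, X t) := measurable_id.prodMk hX
  have h3 := h.comp h2
  exact h3

/-- The weighted norm `‖ |ξ₁|^{-s} g ‖_{L²}`. -/
def wNorm (s : ℝ) (g : ℝ × ℝ → ℂ) : ℝ≥0∞ :=
  (∫⁻ ξ : ℝ × ℝ, (ENNReal.ofReal (|ξ.1| ^ (-s)) * ‖g ξ‖ₑ) ^ (2 : ℝ)) ^ ((1 : ℝ) / 2)

/-- The square of the constant in the Strichartz estimate with weight `|ξ₁|^{-s}`. -/
def zkConst (s : ℝ) : ℝ≥0∞ :=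
  2 * ENNReal.ofReal (Real.sqrt Real.pi * (1 / (1 / 2 + 2 * s) + 16)) *
    singMass ((2 + 2 * s) / 3) ^ ((8 : ℝ) / 9)

lemma zkConst_lt_top {s : ℝ} (hs1 : s < 1 / 4) : zkConst s < ⊤ := by
  have : singMass ((2 + 2 * s) / 3) < ⊤ := singMass_lt_top (by linarith)
  exact ENNReal.mul_lt_top (ENNReal.mul_lt_top (by simp) ENNReal.ofReal_lt_top)
    (ENNReal.rpow_lt_top_of_nonneg (by norm_num) this.ne)

lemma ae_fst_ne_zero : ∀ᵐ ξ : ℝ × ℝ, ξ.1 ≠ 0 := by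
  have := Measure.quasiMeasurePreserving_fst (μ := (volume : Measure ℝ))
    (ν := (volume : Measure ℝ))
  exact this.ae (Measure.ae_ne volume (0 : ℝ))

/-- Pairing the flow along a curve with `w` moves the flow to the dual operator. -/
lemma pairing {g : ℝ × ℝ → ℂ} (hg : Integrable g) {w : ℝ → ℂ} {X : ℝ → ℝ × ℝ} {M : ℝ}
    (hw : Measurable w) (hX : Measurable X) (hM : ∀ t, ‖w t‖ ≤ M) :
    ∫ t in Set.Icc (0 : ℝ) 1, w t * zkFlow g t (X t) = ∫ ξ, g ξ * zkDual w X ξ := by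
  set ν : Measure ℝ := volume.restrict (Set.Icc (0 : ℝ) 1) with hν
  have hInt : Integrable (Function.uncurry fun (ξ : ℝ × ℝ) (t : ℝ) =>
      g ξ * (w t * zkExp t (X t) ξ)) ((volume : Measure (ℝ × ℝ)).prod ν) := by
    have h1 : Integrable (fun r : (ℝ × ℝ) × ℝ => g r.1 * (1 : ℂ))
        ((volume : Measure (ℝ × ℝ)).prod ν) := hg.mul_prod (integrable_const (1 : ℂ))
    simp only [mul_one] at h1
    refine h1.mul_bdd (c := M)
      ((hw.comp measurable_snd).mul (measurable_zkExp_curve hX)).aestronglyMeasurable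
      (Filter.Eventually.of_forall fun r => ?_)
    simp only [norm_mul, norm_zkExp, mul_one]
    exact hM _
  simp only [zkDual, zkFlow, ← hν]
  simp_rw [← integral_const_mul]
  rw [integral_integral_swap hInt]
  refine integral_congr_ae (Filter.Eventually.of_forall fun t => ?_)
  refine integral_congr_ae (Filter.Eventually.of_forall fun ξ => ?_)
  simp only
  ring

/-- Cauchy–Schwarz on the frequency side, combined with the energy estimate for the dual operator
and Young's inequality in time. -/
lemma dual_bound {g : ℝ × ℝ → ℂ} (hg : Integrable g) {w : ℝ → ℂ} {X : ℝ → ℝ × ℝ} {M : ℝ}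
    (mw : Measurable w) (hX : Measurable X) (bw : ∀ t, ‖w t‖ ≤ M) {s : ℝ} (hs : 0 ≤ s)
    (hs1 : s < 1 / 4) :
    ‖∫ ξ, g ξ * zkDual w X ξ‖ₑ ≤ wNorm s g * (zkConst s *
      (∫⁻ t in Set.Icc (0 : ℝ) 1, ‖w t‖ₑ ^ ((9 : ℝ) / 5)) ^ ((10 : ℝ) / 9)) ^ ((1 : ℝ) / 2) := by
  have mD : Measurable (zkDual w X) := measurable_zkDual mw hX
  have mA : Measurable fun ξ : ℝ × ℝ => ENNReal.ofReal (|ξ.1| ^ (-s)) := by fun_prop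
  have mB : Measurable fun ξ : ℝ × ℝ => ENNReal.ofReal (|ξ.1| ^ s) := by fun_prop
  have hE : ∫⁻ ξ : ℝ × ℝ, (ENNReal.ofReal (|ξ.1| ^ s) * ‖zkDual w X ξ‖ₑ) ^ (2 : ℝ) ≤
      zkConst s *
      (∫⁻ t in Set.Icc (0 : ℝ) 1, ‖w t‖ₑ ^ ((9 : ℝ) / 5)) ^ ((10 : ℝ) / 9) := by
    have e1 := energy_full mw hX bw hs hs1
    have e2 := young_time mw.enorm ((2 + 2 * s) / 3)
    rw [zkConst, mul_assoc]
    refine le_trans (le_of_eq (lintegral_congr fun ξ => ?_)) (e1.trans (by gcongr))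
    rw [← ENNReal.rpow_natCast, ← ENNReal.rpow_natCast, ← ENNReal.mul_rpow_of_nonneg _ _ (by simp)]
    norm_num
  suffices h : ‖∫ ξ, g ξ * zkDual w X ξ‖ₑ ≤ wNorm s g * (∫⁻ ξ : ℝ × ℝ,
      (ENNReal.ofReal (|ξ.1| ^ s) * ‖zkDual w X ξ‖ₑ) ^ (2 : ℝ)) ^ ((1 : ℝ) / 2) from
    h.trans (by gcongr)
  refine (enorm_integral_le_lintegral_enorm _).trans ?_
  refine le_trans (le_of_eq (lintegral_congr_ae ?_))
    (ENNReal.lintegral_mul_le_Lp_mul_Lq volume Real.HolderConjugate.two_two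
      (mA.aemeasurable.mul hg.aestronglyMeasurable.enorm)
      (mB.mul mD.enorm).aemeasurable)
  filter_upwards [ae_fst_ne_zero] with ξ hξ
  have h1 : ENNReal.ofReal (|ξ.1| ^ (-s)) * ENNReal.ofReal (|ξ.1| ^ s) = 1 := by
    rw [← ENNReal.ofReal_mul (by positivity), ← Real.rpow_add (abs_pos.2 hξ)]
    simp
  simp only [Pi.mul_apply, enorm_mul]
  calc _ = (ENNReal.ofReal (|ξ.1| ^ (-s)) * ENNReal.ofReal (|ξ.1| ^ s)) *
      (‖g ξ‖ₑ * ‖zkDual w X ξ‖ₑ) := by rw [h1, one_mul]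
    _ = _ := by ring

/-- The Strichartz estimate along a measurable curve, by duality with `w = conj u |u|^{1/4}`. -/
lemma strichartz_curve {g : ℝ × ℝ → ℂ} (hg : Integrable g) {X : ℝ → ℝ × ℝ} (hX : Measurable X)
    {s : ℝ} (hs : 0 ≤ s) (hs1 : s < 1 / 4) :
    (∫⁻ t in Set.Icc (0 : ℝ) 1, ‖zkFlow g t (X t)‖ₑ ^ ((9 : ℝ) / 4)) ^ ((4 : ℝ) / 9) ≤
      wNorm s g * zkConst s ^ ((1 : ℝ) / 2) := by
  set u : ℝ → ℂ := fun t => zkFlow g t (X t) with hu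
  set M := ∫ ξ, ‖g ξ‖ with hMdef
  have hM0 : 0 ≤ M := integral_nonneg fun _ => norm_nonneg _
  have mu : Measurable u := measurable_zkFlow_curve hg hX
  have bu : ∀ t, ‖u t‖ ≤ M := fun t => norm_zkFlow_le g t (X t)
  set w : ℝ → ℂ := fun t => (starRingEnd ℂ) (u t) * ((‖u t‖ ^ ((1 : ℝ) / 4) : ℝ) : ℂ) with hw
  have mw : Measurable w := (Complex.continuous_conj.measurable.comp mu).mul
    (Complex.measurable_ofReal.comp (mu.norm.pow_const _))
  have nw : ∀ t, ‖w t‖ = ‖u t‖ ^ ((5 : ℝ) / 4) := by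
    intro t
    rw [hw]
    simp only [norm_mul, RCLike.norm_conj, Complex.norm_real]
    rw [Real.norm_of_nonneg (by positivity)]
    nth_rewrite 1 [← Real.rpow_one ‖u t‖]
    rw [← Real.rpow_add_of_nonneg (norm_nonneg _) (by norm_num) (by norm_num)]
    norm_num
  have bw : ∀ t, ‖w t‖ ≤ M ^ ((5 : ℝ) / 4) := fun t => by
    rw [nw]; exact Real.rpow_le_rpow (norm_nonneg _) (bu t) (by norm_num)
  have ew : ∀ t, ‖w t‖ₑ ^ ((9 : ℝ) / 5) = ‖u t‖ₑ ^ ((9 : ℝ) / 4) := by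
    intro t
    rw [← ofReal_norm, nw, ← ENNReal.ofReal_rpow_of_nonneg (norm_nonneg _) (by norm_num),
      ofReal_norm, ← ENNReal.rpow_mul]
    norm_num
  have hwu : ∀ t, w t * u t = ((‖u t‖ ^ ((9 : ℝ) / 4) : ℝ) : ℂ) := by
    intro t
    have h1 : w t * u t = (‖u t‖ : ℂ) ^ 2 * ((‖u t‖ ^ ((1 : ℝ) / 4) : ℝ) : ℂ) := by
      have h2 : (starRingEnd ℂ) (u t) * u t = (‖u t‖ : ℂ) ^ 2 := RCLike.conj_mul _
      rw [← h2]; simp only [hw]; ring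
    rw [h1, ← Complex.ofReal_pow, ← Complex.ofReal_mul, ← Real.rpow_natCast,
      ← Real.rpow_add_of_nonneg (norm_nonneg _) (by norm_num) (by norm_num)]
    norm_num
  set P := ∫⁻ t in Set.Icc (0 : ℝ) 1, ‖u t‖ₑ ^ ((9 : ℝ) / 4) with hP
  have ePw : ∀ t, ‖u t‖ₑ ^ ((9 : ℝ) / 4) = ENNReal.ofReal (‖u t‖ ^ ((9 : ℝ) / 4)) := fun t => by
    rw [← ENNReal.ofReal_rpow_of_nonneg (norm_nonneg _) (by norm_num), ofReal_norm]
  have hPtop : P ≠ ⊤ := by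
    have h1 : ∫⁻ _ in Set.Icc (0 : ℝ) 1, ENNReal.ofReal (M ^ ((9 : ℝ) / 4)) ≠ ⊤ := by simp
    have h2 : P ≤ ∫⁻ _ in Set.Icc (0 : ℝ) 1, ENNReal.ofReal (M ^ ((9 : ℝ) / 4)) := by
      rw [hP]
      refine lintegral_mono fun t => ?_
      rw [ePw]
      exact ENNReal.ofReal_le_ofReal (Real.rpow_le_rpow (norm_nonneg _) (bu t) (by norm_num))
    exact ne_top_of_le_ne_top h1 h2
  have iP : Integrable (fun t => ‖u t‖ ^ ((9 : ℝ) / 4)) (volume.restrict (Set.Icc (0 : ℝ) 1)) := by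
    refine ⟨(mu.norm.pow_const _).aestronglyMeasurable, ?_⟩
    have h1 : ∫⁻ t in Set.Icc (0 : ℝ) 1, ‖‖u t‖ ^ ((9 : ℝ) / 4)‖ₑ = P := by
      rw [hP]
      refine lintegral_congr fun t => ?_
      rw [ePw, ← ofReal_norm, Real.norm_of_nonneg (by positivity)]
    rw [HasFiniteIntegral, h1]
    exact hPtop.lt_top
  have hP1 : P = ‖∫ ξ, g ξ * zkDual w X ξ‖ₑ := by
    rw [← pairing hg mw hX bw]
    have h0 : ∀ t, 0 ≤ ‖u t‖ ^ ((9 : ℝ) / 4) := fun t => by positivity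
    have : ∫ t in Set.Icc (0 : ℝ) 1, w t * zkFlow g t (X t) =
        ∫ t in Set.Icc (0 : ℝ) 1, ((‖u t‖ ^ ((9 : ℝ) / 4) : ℝ) : ℂ) :=
      integral_congr_ae (Filter.Eventually.of_forall fun t => hwu t)
    rw [this, integral_complex_ofReal, ← ofReal_norm, Complex.norm_real,
      Real.norm_of_nonneg (integral_nonneg h0), ofReal_integral_eq_lintegral_ofReal iP
        (Filter.Eventually.of_forall h0)]
    exact lintegral_congr fun t => ePw t
  have hP2 : P ≤ wNorm s g * (zkConst s * P ^ ((10 : ℝ) / 9)) ^ ((1 : ℝ) / 2) := by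
    have h := dual_bound hg mw hX bw hs hs1
    simp_rw [ew] at h
    rw [← hP, ← hP1] at h
    exact h
  have hP3 : P ≤ wNorm s g * zkConst s ^ ((1 : ℝ) / 2) * P ^ ((5 : ℝ) / 9) := by
    refine hP2.trans ?_
    rw [mul_assoc]
    gcongr
    refine le_of_eq ?_
    rw [ENNReal.mul_rpow_of_nonneg _ _ (by norm_num), ← ENNReal.rpow_mul]
    norm_num
  by_cases hP0 : P = 0
  · rw [hP0, ENNReal.zero_rpow_of_pos (by norm_num)]; exact zero_le
  have h59 : P ^ ((5 : ℝ) / 9) ≠ 0 := by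
    rw [Ne, ENNReal.rpow_eq_zero_iff]; simp [hP0, hPtop]
  have h59' : P ^ ((5 : ℝ) / 9) ≠ ⊤ := ENNReal.rpow_ne_top_of_nonneg (by norm_num) hPtop
  have h49 : P = P ^ ((4 : ℝ) / 9) * P ^ ((5 : ℝ) / 9) := by
    rw [← ENNReal.rpow_add_of_nonneg _ _ (by norm_num) (by norm_num)]; norm_num
  exact (ENNReal.mul_le_mul_iff_left h59 h59').1 (h49.symm.le.trans hP3)

/-- A measurable choice of a point at which `|u(t, ·)|` attains its maximum over the first
`N + 1` points of the sequence `d`. -/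
def maxCurve (g : ℝ × ℝ → ℂ) (d : ℕ → ℝ × ℝ) : ℕ → ℝ → ℝ × ℝ
  | 0, _ => d 0
  | N + 1, t =>
    open Classical in
    if ‖zkFlow g t (maxCurve g d N t)‖ < ‖zkFlow g t (d (N + 1))‖ then d (N + 1)
    else maxCurve g d N t

lemma measurable_maxCurve {g : ℝ × ℝ → ℂ} (hg : Integrable g) (d : ℕ → ℝ × ℝ) (N : ℕ) :
    Measurable (maxCurve g d N) := by
  induction N with
  | zero => exact measurable_const
  | succ N ih =>
    refine Measurable.ite (measurableSet_lt ?_ ?_) measurable_const ih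
    · exact (measurable_zkFlow_curve hg ih).norm
    · exact (measurable_zkFlow_curve hg measurable_const).norm

lemma maxCurve_step (g : ℝ × ℝ → ℂ) (d : ℕ → ℝ × ℝ) (N : ℕ) (t : ℝ) :
    ‖zkFlow g t (maxCurve g d N t)‖ ≤ ‖zkFlow g t (maxCurve g d (N + 1) t)‖ := by
  rw [maxCurve]
  split_ifs with h
  · exact h.le
  · exact le_rfl

lemma le_maxCurve (g : ℝ × ℝ → ℂ) (d : ℕ → ℝ × ℝ) (N : ℕ) (t : ℝ) :
    ‖zkFlow g t (d N)‖ ≤ ‖zkFlow g t (maxCurve g d N t)‖ := by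
  cases N with
  | zero => exact le_rfl
  | succ N =>
    rw [maxCurve]
    split_ifs with h
    · exact le_rfl
    · exact not_lt.1 h

/-- The Strichartz estimate for the supremum in space. By continuity the supremum is the increasing
limit of the maxima over the first points of a dense sequence, each of which is attained along a
measurable curve. -/
lemma strichartz_flow {g : ℝ × ℝ → ℂ} (hg : Integrable g) {s : ℝ} (hs : 0 ≤ s)
    (hs1 : s < 1 / 4) :
    (∫⁻ t in Set.Icc (0 : ℝ) 1, eLpNorm (zkFlow g t) ⊤ volume ^ ((9 : ℝ) / 4)) ^ ((4 : ℝ) / 9) ≤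
      wNorm s g * zkConst s ^ ((1 : ℝ) / 2) := by
  set d : ℕ → ℝ × ℝ := TopologicalSpace.denseSeq (ℝ × ℝ) with hd
  set f : ℕ → ℝ → ℝ≥0∞ := fun N t => ‖zkFlow g t (maxCurve g d N t)‖ₑ ^ ((9 : ℝ) / 4) with hf
  have mf : ∀ N, Measurable (f N) := fun N =>
    (measurable_zkFlow_curve hg (measurable_maxCurve hg d N)).enorm.pow_const _
  have hmono : Monotone f := monotone_nat_of_le_succ fun N t => by
    refine ENNReal.rpow_le_rpow ?_ (by norm_num)
    rw [← ofReal_norm, ← ofReal_norm]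
    exact ENNReal.ofReal_le_ofReal (maxCurve_step g d N t)
  have hsup : ∀ t, eLpNorm (zkFlow g t) ⊤ volume ^ ((9 : ℝ) / 4) ≤ ⨆ N, f N t := by
    intro t
    have h1 : ⨆ N, f N t = (⨆ N, ‖zkFlow g t (maxCurve g d N t)‖ₑ) ^ ((9 : ℝ) / 4) := by
      have h94 : (0 : ℝ) < 9 / 4 := by norm_num
      exact (OrderIso.map_iSup (ENNReal.orderIsoRpow ((9 : ℝ) / 4) h94)
        (fun N : ℕ => ‖zkFlow g t (maxCurve g d N t)‖ₑ)).symm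
    rw [h1]
    refine ENNReal.rpow_le_rpow ?_ (by norm_num)
    rw [eLpNorm_exponent_top]
    refine essSup_le_of_ae_le _ (Filter.Eventually.of_forall fun x => ?_)
    have hc : Continuous fun x => ‖zkFlow g t x‖ₑ :=
      ((continuous_zkFlow hg).comp (by fun_prop : Continuous fun x : ℝ × ℝ => (t, x))).enorm
    have hcl : IsClosed {x | ‖zkFlow g t x‖ₑ ≤ ⨆ N, ‖zkFlow g t (maxCurve g d N t)‖ₑ} :=
      isClosed_le hc continuous_const
    have hsub : Set.range d ⊆ {x | ‖zkFlow g t x‖ₑ ≤ ⨆ N, ‖zkFlow g t (maxCurve g d N t)‖ₑ} := by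
      rintro _ ⟨N, rfl⟩
      refine le_trans ?_ (le_iSup (fun N => ‖zkFlow g t (maxCurve g d N t)‖ₑ) N)
      rw [← ofReal_norm, ← ofReal_norm]
      exact ENNReal.ofReal_le_ofReal (le_maxCurve g d N t)
    exact hcl.closure_subset_iff.2 hsub (TopologicalSpace.denseRange_denseSeq (ℝ × ℝ) x)
  have hle : ∫⁻ t in Set.Icc (0 : ℝ) 1, eLpNorm (zkFlow g t) ⊤ volume ^ ((9 : ℝ) / 4) ≤
      (wNorm s g * zkConst s ^ ((1 : ℝ) / 2)) ^ ((9 : ℝ) / 4) := by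
    refine (lintegral_mono hsup).trans ?_
    rw [lintegral_iSup mf hmono]
    refine iSup_le fun N => ?_
    have h := ENNReal.rpow_le_rpow
      (strichartz_curve hg (measurable_maxCurve hg d N) hs hs1) (by norm_num : (0 : ℝ) ≤ 9 / 4)
    rw [← ENNReal.rpow_mul] at h
    norm_num at h
    exact h
  refine (ENNReal.rpow_le_rpow hle (by norm_num)).trans (le_of_eq ?_)
  rw [← ENNReal.rpow_mul]
  norm_num

/-! ### Plancherel -/

open FourierTransform SchwartzMap in
/-- Plancherel's theorem for the Fourier integral of a function in `L¹ ∩ L²`. The Fourier integral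
agrees almost everywhere with the `L²` Fourier transform since the two have the same pairing with
every test function. -/
lemma eLpNorm_fourier_eq {V : Type*} [NormedAddCommGroup V] [InnerProductSpace ℝ V]
    [FiniteDimensional ℝ V] [MeasurableSpace V] [BorelSpace V] {f : V → ℂ} (h1 : Integrable f)
    (h2 : MemLp f 2) : eLpNorm (𝓕 f) 2 volume = eLpNorm f 2 volume := by
  set L : Lp ℂ 2 (volume : Measure V) := h2.toLp f with hL
  have hLf : L =ᵐ[volume] f := h2.coeFn_toLp
  have hcont : Continuous (𝓕 f) := VectorFourier.fourierIntegral_continuous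
    Real.continuous_fourierChar (innerSL ℝ).continuous₂ h1
  have hae : ∀ᵐ x, (𝓕 L : Lp ℂ 2 (volume : Measure V)) x = 𝓕 f x := by
    refine ae_eq_of_integral_contDiff_smul_eq ((Lp.memLp _).locallyIntegrable (by norm_num))
      hcont.locallyIntegrable ?_
    intro g g_smooth g_cpt
    have hg₁ : HasCompactSupport (Complex.ofRealCLM ∘ g) := g_cpt.comp_left rfl
    have hg₂ : ContDiff ℝ ((⊤ : ℕ∞) : WithTop ℕ∞) (Complex.ofRealCLM ∘ g) := by fun_prop
    set G : 𝓢(V, ℂ) := hg₁.toSchwartzMap hg₂ with hG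
    have hGc : ∀ x, G x = (g x : ℂ) := fun x => rfl
    have e1 := Lp.fourier_toTemperedDistribution_eq L
    have e2 := congrArg (fun D => D G) e1
    rw [TemperedDistribution.fourier_apply, Lp.toTemperedDistribution_apply,
      Lp.toTemperedDistribution_apply] at e2
    have e3 : ∫ x, (𝓕 G) x • L x = ∫ x, (𝓕 G) x • f x := by
      refine integral_congr_ae ?_
      filter_upwards [hLf] with x hx
      rw [hx]
    have e4 : ∫ x, (𝓕 G) x • f x = ∫ x, G x • 𝓕 f x := by
      have := VectorFourier.integral_fourierIntegral_smul_eq_flip (e := Real.fourierChar)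
        (L := innerₗ V) (μ := volume) (ν := volume) Real.continuous_fourierChar
        continuous_inner G.integrable h1
      rw [flip_innerₗ] at this
      exact this
    calc ∫ x, g x • (𝓕 L : Lp ℂ 2 (volume : Measure V)) x
        = ∫ x, G x • (𝓕 L : Lp ℂ 2 (volume : Measure V)) x := by
          refine integral_congr_ae (Filter.Eventually.of_forall fun x => ?_)
          simp only [hGc]; exact (Complex.coe_smul _ _).symm
      _ = ∫ x, G x • 𝓕 f x := by rw [← e2, e3, e4]
      _ = _ := by
          refine integral_congr_ae (Filter.Eventually.of_forall fun x => ?_)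
          simp only [hGc]; exact Complex.coe_smul _ _
  have hn := Lp.norm_fourier_eq L
  rw [← eLpNorm_congr_ae hae, ← eLpNorm_congr_ae hLf]
  rw [Lp.norm_def, Lp.norm_def] at hn
  exact (ENNReal.toReal_eq_toReal_iff' (Lp.eLpNorm_ne_top _) (Lp.eLpNorm_ne_top _)).1 hn

/-- The plane `ℝ × ℝ` with its Euclidean norm. -/
abbrev EPlane : Type := WithLp 2 (ℝ × ℝ)

open FourierTransform in
lemma FT_eq_fourier (f : ℝ × ℝ → ℂ) (v : EPlane) :
    FT f (WithLp.ofLp v) = 𝓕 (fun x : EPlane => f (WithLp.ofLp x)) v := by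
  rw [Real.fourier_eq']
  have hmp := WithLp.volume_preserving_ofLp ℝ ℝ
  have hme : MeasurableEmbedding (WithLp.ofLp : EPlane → ℝ × ℝ) :=
    (MeasurableEquiv.toLp 2 (ℝ × ℝ)).symm.measurableEmbedding
  rw [FT, ← hmp.integral_comp hme]
  refine integral_congr_ae (Filter.Eventually.of_forall fun x => ?_)
  simp only [smul_eq_mul, WithLp.prod_inner_apply]
  congr 3
  simp
  ring

lemma eLpNorm_FT_eq {f : ℝ × ℝ → ℂ} (h1 : Integrable f) (h2 : MemLp f 2) :
    eLpNorm (FT f) 2 volume = eLpNorm f 2 volume := by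
  have hmp := WithLp.volume_preserving_ofLp ℝ ℝ
  have hme : MeasurableEmbedding (WithLp.ofLp : EPlane → ℝ × ℝ) :=
    (MeasurableEquiv.toLp 2 (ℝ × ℝ)).symm.measurableEmbedding
  have hc : ∀ F : ℝ × ℝ → ℂ, eLpNorm (fun v : EPlane => F (WithLp.ofLp v)) 2 volume =
      eLpNorm F 2 volume := fun F => by
    rw [← hmp.map_eq, hme.eLpNorm_map_measure]; rfl
  have i1 : Integrable (fun v : EPlane => f (WithLp.ofLp v)) :=
    (hmp.integrable_comp_emb hme).2 h1
  have i2 : MemLp (fun v : EPlane => f (WithLp.ofLp v)) 2 := h2.comp_measurePreserving hmp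
  rw [← hc, ← hc f, ← eLpNorm_fourier_eq i1 i2]
  congr 1
  funext v
  exact FT_eq_fourier f v

lemma FTinv_eq (f : ℝ × ℝ → ℂ) (x : ℝ × ℝ) : FTinv f x = FT f (-x) := by
  rw [FTinv, FT]
  refine integral_congr_ae (Filter.Eventually.of_forall fun ξ => ?_)
  simp only [Prod.fst_neg, Prod.snd_neg]
  congr 4
  ring

lemma eLpNorm_FTinv_eq {f : ℝ × ℝ → ℂ} (h1 : Integrable f) (h2 : MemLp f 2) :
    eLpNorm (FTinv f) 2 volume = eLpNorm f 2 volume := by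
  rw [← eLpNorm_FT_eq h1 h2]
  have : FTinv f = FT f ∘ Neg.neg := funext fun x => FTinv_eq f x
  rw [this]
  have hmp : MeasurePreserving (Neg.neg : ℝ × ℝ → ℝ × ℝ) := Measure.measurePreserving_neg _
  nth_rewrite 2 [← hmp.map_eq]
  exact ((MeasurableEquiv.neg (ℝ × ℝ)).measurableEmbedding.eLpNorm_map_measure ).symm

open FourierTransform SchwartzMap in
/-- The Fourier transform of a Schwartz function is a Schwartz function. -/
lemma exists_schwartz_FT (φ : SchwartzMap (ℝ × ℝ) ℂ) :
    ∃ ψ : SchwartzMap (ℝ × ℝ) ℂ, ∀ ξ, ψ ξ = FT φ ξ := by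
  set e : EPlane ≃L[ℝ] ℝ × ℝ := WithLp.prodContinuousLinearEquiv 2 ℝ ℝ ℝ with he
  set φ' : 𝓢(EPlane, ℂ) := SchwartzMap.compCLMOfContinuousLinearEquiv ℝ e φ with hφ'
  refine ⟨SchwartzMap.compCLMOfContinuousLinearEquiv ℝ e.symm (𝓕 φ'), fun ξ => ?_⟩
  have := FT_eq_fourier φ (WithLp.toLp 2 ξ)
  exact this.symm

/-! ### Weighted norms of Schwartz data -/

/-- The singularity at the origin is integrable since `a < 1`, and away from it the weight is at
most `1`. -/
lemma integrable_weight {a : ℝ} (ha : 0 ≤ a) (ha1 : a < 1) :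
    Integrable fun x : ℝ => |x| ^ (-a) * (1 + x ^ 2)⁻¹ := by
  have h1 := (intervalIntegral.intervalIntegrable_cpow' (a := -1) (b := 1)
    (r := ((-a : ℝ) : ℂ)) (by simpa using ha1)).norm
  rw [intervalIntegrable_iff_integrableOn_Ioc_of_le (by norm_num)] at h1
  have h2 : IntegrableOn (fun x : ℝ => |x| ^ (-a)) (Set.Ioc (-1) 1) := by
    refine h1.congr_fun (fun x _ => ?_) measurableSet_Ioc
    simp only [Complex.norm_cpow_real, Complex.norm_real, Real.norm_eq_abs]
  rw [← integrable_indicator_iff measurableSet_Ioc] at h2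
  refine (h2.add integrable_inv_one_add_sq).mono' (by fun_prop)
    (Filter.Eventually.of_forall fun x => ?_)
  have h3 : 0 < (1 + x ^ 2)⁻¹ := by positivity
  have h4 : (1 + x ^ 2)⁻¹ ≤ 1 := inv_le_one_of_one_le₀ (by nlinarith [sq_nonneg x])
  have h5 : 0 ≤ |x| ^ (-a) := by positivity
  rw [Real.norm_of_nonneg (by positivity)]
  simp only [Pi.add_apply]
  by_cases hx : x ∈ Set.Ioc (-1 : ℝ) 1
  · rw [Set.indicator_of_mem hx]
    nlinarith
  · rw [Set.indicator_of_notMem hx, zero_add]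
    have h6 : 1 ≤ |x| := by
      by_contra h
      rw [not_le, abs_lt] at h
      exact hx ⟨h.1, h.2.le⟩
    have h7 : |x| ^ (-a) ≤ 1 := Real.rpow_le_one_of_one_le_of_nonpos h6 (by linarith)
    nlinarith

lemma integrable_weight_prod {a : ℝ} (ha : 0 ≤ a) (ha1 : a < 1) :
    Integrable fun ξ : ℝ × ℝ => |ξ.1| ^ (-a) * (1 + ξ.1 ^ 2)⁻¹ * (1 + ξ.2 ^ 2)⁻¹ :=
  (integrable_weight ha ha1).mul_prod integrable_inv_one_add_sq

lemma schwartz_decay (ψ : SchwartzMap (ℝ × ℝ) ℂ) :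
    ∃ C : ℝ, 0 ≤ C ∧ ∀ ξ, ‖ψ ξ‖ ≤ C * ((1 + ξ.1 ^ 2)⁻¹ * (1 + ξ.2 ^ 2)⁻¹) := by
  have h := fun ξ => SchwartzMap.one_add_le_sup_seminorm_apply (𝕜 := ℝ) (m := (4, 0)) (k := 4)
    (n := 0) le_rfl le_rfl ψ ξ
  set C : ℝ := 2 ^ 4 * (Finset.Iic (4, 0)).sup (fun m => SchwartzMap.seminorm ℝ m.1 m.2) ψ with hC
  have hC0 : 0 ≤ C := le_trans (by positivity) (h 0)
  refine ⟨C, hC0, fun ξ => ?_⟩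
  have h1 := h ξ
  rw [norm_iteratedFDeriv_zero] at h1
  rw [← mul_inv, ← div_eq_mul_inv, le_div_iff₀ (by positivity), mul_comm]
  refine le_trans (mul_le_mul_of_nonneg_right ?_ (norm_nonneg _)) h1
  have hn : 0 ≤ ‖ξ‖ := norm_nonneg _
  have hb : ∀ y : ℝ, |y| ≤ ‖ξ‖ → 1 + y ^ 2 ≤ (1 + ‖ξ‖) ^ 2 := fun y hy => by
    have : y ^ 2 ≤ ‖ξ‖ ^ 2 := sq_le_sq' (by linarith [neg_abs_le y]) (by linarith [le_abs_self y])
    nlinarith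
  calc (1 + ξ.1 ^ 2) * (1 + ξ.2 ^ 2) ≤ (1 + ‖ξ‖) ^ 2 * (1 + ‖ξ‖) ^ 2 :=
        mul_le_mul (hb _ (norm_fst_le ξ)) (hb _ (norm_snd_le ξ)) (by positivity) (by positivity)
    _ = (1 + ‖ξ‖) ^ 4 := by ring

/-- The singular multiplier `|ξ₁|^{-s}` preserves integrability of Schwartz functions. -/
lemma integrable_singular_mul (ψ : SchwartzMap (ℝ × ℝ) ℂ) {s : ℝ} (hs : 0 ≤ s) (hs1 : s < 1) :
    Integrable fun ξ : ℝ × ℝ => ((|ξ.1| ^ (-s) : ℝ) : ℂ) * ψ ξ := by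
  obtain ⟨C, hC, h⟩ := schwartz_decay ψ
  have hm : Measurable fun ξ : ℝ × ℝ => ((|ξ.1| ^ (-s) : ℝ) : ℂ) := by fun_prop
  refine ((integrable_weight_prod hs hs1).const_mul C).mono'
    (hm.aestronglyMeasurable.mul ψ.continuous.aestronglyMeasurable)
    (Filter.Eventually.of_forall fun ξ => ?_)
  rw [norm_mul, Complex.norm_real, Real.norm_of_nonneg (by positivity)]
  calc _ ≤ |ξ.1| ^ (-s) * (C * ((1 + ξ.1 ^ 2)⁻¹ * (1 + ξ.2 ^ 2)⁻¹)) :=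
        mul_le_mul_of_nonneg_left (h ξ) (by positivity)
    _ = _ := by ring

lemma memLp_singular_mul (ψ : SchwartzMap (ℝ × ℝ) ℂ) {s : ℝ} (hs : 0 ≤ s) (hs1 : s < 1 / 2) :
    MemLp (fun ξ : ℝ × ℝ => ((|ξ.1| ^ (-s) : ℝ) : ℂ) * ψ ξ) 2 := by
  obtain ⟨C, hC, h⟩ := schwartz_decay ψ
  have hm : Measurable fun ξ : ℝ × ℝ => ((|ξ.1| ^ (-s) : ℝ) : ℂ) := by fun_prop
  have hM := hm.aestronglyMeasurable (μ := (volume : Measure (ℝ × ℝ))).mul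
    ψ.continuous.aestronglyMeasurable
  refine (memLp_two_iff_integrable_sq_norm hM).2 ?_
  refine ((integrable_weight_prod (a := 2 * s) (by linarith) (by linarith)).const_mul
    (C ^ 2)).mono' (hM.norm.pow 2) (Filter.Eventually.of_forall fun ξ => ?_)
  simp only [Pi.mul_apply]
  rw [Real.norm_of_nonneg (by positivity), norm_mul, Complex.norm_real,
    Real.norm_of_nonneg (by positivity), mul_pow]
  have e : (|ξ.1| ^ (-s)) ^ 2 = |ξ.1| ^ (-(2 * s)) := by
    rw [← Real.rpow_mul_natCast (abs_nonneg _)]; congr 1; push_cast; ring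
  have hw : ∀ y : ℝ, ((1 + y ^ 2)⁻¹) ^ 2 ≤ (1 + y ^ 2)⁻¹ := fun y => by
    have h3 : 0 < (1 + y ^ 2)⁻¹ := by positivity
    have h4 : (1 + y ^ 2)⁻¹ ≤ 1 := inv_le_one_of_one_le₀ (by nlinarith [sq_nonneg y])
    nlinarith
  rw [e]
  calc _ ≤ |ξ.1| ^ (-(2 * s)) * (C * ((1 + ξ.1 ^ 2)⁻¹ * (1 + ξ.2 ^ 2)⁻¹)) ^ 2 := by
        gcongr; exact h ξ
    _ = C ^ 2 * (|ξ.1| ^ (-(2 * s)) * (((1 + ξ.1 ^ 2)⁻¹) ^ 2 * ((1 + ξ.2 ^ 2)⁻¹) ^ 2)) := by ring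
    _ ≤ C ^ 2 * (|ξ.1| ^ (-(2 * s)) * ((1 + ξ.1 ^ 2)⁻¹ * (1 + ξ.2 ^ 2)⁻¹)) := by
        gcongr <;> exact hw _
    _ = _ := by ring

lemma wNorm_eq (s : ℝ) (g : ℝ × ℝ → ℂ) :
    wNorm s g = eLpNorm (fun ξ : ℝ × ℝ => ((|ξ.1| ^ (-s) : ℝ) : ℂ) * g ξ) 2 volume := by
  rw [eLpNorm_eq_lintegral_rpow_enorm_toReal two_ne_zero ENNReal.ofNat_ne_top, wNorm]
  simp only [ENNReal.toReal_ofNat]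
  congr 1
  refine lintegral_congr fun ξ => ?_
  rw [enorm_mul, ← ofReal_norm (((|ξ.1| ^ (-s) : ℝ) : ℂ)), Complex.norm_real,
    Real.norm_of_nonneg (by positivity)]

lemma U_eq_zkFlow (t : ℝ) (φ : ℝ × ℝ → ℂ) : U t φ = zkFlow (FT φ) t := by
  funext x
  rw [U, FTinv, zkFlow]
  refine integral_congr_ae (Filter.Eventually.of_forall fun ξ => ?_)
  simp only [zkExp, zkPhase]
  rw [← mul_assoc, ← Complex.exp_add]
  congr 2
  push_cast
  ring

lemma wNorm_zero_FT (φ : SchwartzMap (ℝ × ℝ) ℂ) : wNorm 0 (FT φ) = eLpNorm φ 2 volume := by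
  rw [wNorm_eq, ← eLpNorm_FT_eq φ.integrable (φ.memLp 2)]
  simp

lemma wNorm_FT_eq_Dx1 (φ : SchwartzMap (ℝ × ℝ) ℂ) {s : ℝ} (hs : 0 ≤ s) (hs1 : s < 1 / 2) :
    wNorm s (FT φ) = eLpNorm (Dx1 (-s) φ) 2 volume := by
  obtain ⟨ψ, hψ⟩ := exists_schwartz_FT φ
  have e : FT φ = ψ := funext fun ξ => (hψ ξ).symm
  rw [wNorm_eq, Dx1, e, eLpNorm_FTinv_eq (integrable_singular_mul ψ hs (by linarith))
    (memLp_singular_mul ψ hs hs1)]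

/-- The estimate for a general weight `|ξ₁|^{-s}`, on the interval `[0, T]` with `T ≤ 1`. -/
lemma L94LinfNorm_U_le (φ : SchwartzMap (ℝ × ℝ) ℂ) {T s : ℝ} (hT : T ≤ 1) (hs : 0 ≤ s)
    (hs1 : s < 1 / 4) :
    L94LinfNorm T (fun t => U t φ) ≤ wNorm s (FT φ) * zkConst s ^ ((1 : ℝ) / 2) := by
  obtain ⟨ψ, hψ⟩ := exists_schwartz_FT φ
  have hi : Integrable (FT φ) := by
    rw [show FT φ = ψ from funext fun ξ => (hψ ξ).symm]; exact ψ.integrable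
  refine le_trans ?_ (strichartz_flow hi hs hs1)
  simp only [L94LinfNorm, U_eq_zkFlow]
  exact ENNReal.rpow_le_rpow (lintegral_mono_set (Set.Icc_subset_Icc_right hT)) (by norm_num)

theorem stmt0 :
    ∃ C : ℝ, 0 < C ∧ ∀ T : ℝ, 0 ≤ T → T ≤ 1 → ∀ φ : SchwartzMap (ℝ × ℝ) ℂ,
      L94LinfNorm T (fun t => U t ⇑φ) ≤ ENNReal.ofReal C * eLpNorm (⇑φ) 2 volume ∧
      L94LinfNorm T (fun t => U t ⇑φ) ≤
        ENNReal.ofReal C * eLpNorm (Dx1 (-(2:ℝ)/9) ⇑φ) 2 volume := by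
  have hfin : ∀ s : ℝ, s < 1 / 4 → zkConst s ^ ((1 : ℝ) / 2) ≠ ⊤ := fun s hs =>
    (ENNReal.rpow_lt_top_of_nonneg (by norm_num) (zkConst_lt_top hs).ne).ne
  set c : ℝ → ℝ := fun s => (zkConst s ^ ((1 : ℝ) / 2)).toReal with hc
  have hc0 : ∀ s, 0 ≤ c s := fun s => ENNReal.toReal_nonneg
  refine ⟨c 0 + c (2 / 9) + 1, by linarith [hc0 0, hc0 (2 / 9)], fun T _ hT1 φ => ?_⟩
  have key : ∀ s : ℝ, 0 ≤ s → s < 1 / 4 → c s ≤ c 0 + c (2 / 9) + 1 →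
      L94LinfNorm T (fun t => U t φ) ≤
        ENNReal.ofReal (c 0 + c (2 / 9) + 1) * wNorm s (FT φ) := fun s hs hs1 hle => by
    refine (L94LinfNorm_U_le φ hT1 hs hs1).trans ?_
    rw [mul_comm]
    refine mul_le_mul_left ?_ _
    rw [← ENNReal.ofReal_toReal (hfin s hs1)]
    exact ENNReal.ofReal_le_ofReal hle
  have h1 := key 0 le_rfl (by norm_num) (by linarith [hc0 (2 / 9)])
  have h2 := key (2 / 9) (by norm_num) (by norm_num) (by linarith [hc0 0])
  rw [wNorm_zero_FT] at h1
  rw [wNorm_FT_eq_Dx1 φ (by norm_num) (by norm_num)] at h2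
  rw [neg_div]
  exact ⟨h1, h2⟩
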